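/- arXiv:1811.03747 — 2 statements merged into one kernel-verified Lean document; each statement's English description precedes it below -/
import Mathlib

section
/- (Infinite induced oriented graph removal lemma.) Let F be a (possibly infinite) set of oriented graphs. For every ε_R > 0 there exist n₀ and δ > 0 such that for every oriented graph G of order n ≥ n₀, if G contains at most δ·n^{|V(H)|} induced copies of H for each H ∈ F, then there exists an oriented graph G' on the same n vertices such that G' contains no induced copy of any H ∈ F and G' can be obtained from G by adding, removing, and/or reorienting the arcs of at most ε_R n² pairs of vertices. -/
open scoped Classical

/-- An oriented graph: the arc relation has no loops and no 2-cycles. -/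
def IsOriented {V : Type*} (A : V → V → Prop) : Prop :=
  ∀ a b : V, A a b → ¬ A b a

/-- `T⃗₃`-freeness: no three vertices span the arcs a→b, b→c, a→c. -/
def T3Free {V : Type*} (A : V → V → Prop) : Prop :=
  ∀ a b c : V, ¬ (A a b ∧ A b c ∧ A a c)

/-- `S` is the vertex set of an induced copy of the directed path `P⃗ₖ` in the
oriented graph with arc relation `A`. -/
def IsInducedPath {V : Type*} (A : V → V → Prop) (k : ℕ) (S : Finset V) : Prop :=
  ∃ f : Fin k → V, Function.Injective f ∧ (∀ v : V, v ∈ S ↔ ∃ i, f i = v) ∧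
    ∀ i j : Fin k, A (f i) (f j) ↔ (j : ℕ) = (i : ℕ) + 1

/-- The number of induced copies of `P⃗ₖ`. -/
noncomputable def numPaths {V : Type*} [Fintype V] [DecidableEq V]
    (A : V → V → Prop) (k : ℕ) : ℕ :=
  (Finset.univ.filter fun S : Finset V => IsInducedPath A k S).card

/-- The number of induced copies of `P⃗ₖ` containing all vertices of `T`. -/
noncomputable def numPathsThrough {V : Type*} [Fintype V] [DecidableEq V]
    (A : V → V → Prop) (k : ℕ) (T : Finset V) : ℕ :=
  (Finset.univ.filter fun S : Finset V => IsInducedPath A k S ∧ T ⊆ S).card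

/-- The density of induced copies of `P⃗ₖ`. -/
noncomputable def pathDensity {V : Type*} [Fintype V] [DecidableEq V]
    (A : V → V → Prop) (k : ℕ) : ℝ :=
  (numPaths A k : ℝ) / ((Fintype.card V).choose k : ℝ)

/-- The maximum density of induced copies of `P⃗ₖ` over all `T⃗₃`-free oriented
graphs on `n` vertices. -/
noncomputable def maxDensityT3 (k n : ℕ) : ℝ :=
  sSup {d : ℝ | ∃ A : Fin n → Fin n → Prop, IsOriented A ∧ T3Free A ∧ d = pathDensity A k}

/-- The maximum density of induced copies of `P⃗ₖ` over all oriented graphs on `n`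
vertices. -/
noncomputable def maxDensityAll (k n : ℕ) : ℝ :=
  sSup {d : ℝ | ∃ A : Fin n → Fin n → Prop, IsOriented A ∧ d = pathDensity A k}

/-- `S` is the vertex set of an induced copy of the oriented graph `H` in the
oriented graph with arc relation `A`. -/
def IsInducedCopy {V W : Type*} (H : W → W → Prop) (A : V → V → Prop) (S : Finset V) : Prop :=
  ∃ f : W → V, Function.Injective f ∧ (∀ v : V, v ∈ S ↔ ∃ w, f w = v) ∧
    ∀ a b : W, A (f a) (f b) ↔ H a b

/-- The number of induced copies of `H` in `A`. -/
noncomputable def numCopies {V W : Type*} [Fintype V] [DecidableEq V]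
    (H : W → W → Prop) (A : V → V → Prop) : ℕ :=
  (Finset.univ.filter fun S : Finset V => IsInducedCopy H A S).card

/-- The number of (unordered) pairs of vertices on which the two oriented graphs `A`
and `B` differ (an arc must be added, removed, or reoriented). -/
noncomputable def pairDiff {V : Type*} [Fintype V] [LinearOrder V]
    (A B : V → V → Prop) : ℕ :=
  (Finset.univ.filter fun p : V × V => p.1 < p.2 ∧
    ¬ ((A p.1 p.2 ↔ B p.1 p.2) ∧ (A p.2 p.1 ↔ B p.2 p.1))).card

/-- `A` is a blow-up of the directed 5-cycle with parts given by the fibers of `g`. -/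
def IsBlowupC5 {V : Type*} (A : V → V → Prop) (g : V → Fin 5) : Prop :=
  ∀ u v : V, A u v ↔ g v = g u + 1

/-- The size of the part of vertices mapped to `i`. -/
noncomputable def partSize {V : Type*} [Fintype V] {m : ℕ} (g : V → Fin m) (i : Fin m) : ℕ :=
  (Finset.univ.filter fun v : V => g v = i).card

/-- `A` is a balanced blow-up of the directed 5-cycle, i.e. isomorphic to `C⃗₅(n)`. -/
def IsBalancedBlowupC5 {V : Type*} [Fintype V] (A : V → V → Prop) : Prop :=
  ∃ g : V → Fin 5, IsBlowupC5 A g ∧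
    ∀ i j : Fin 5, (partSize g i : ℤ) - (partSize g j : ℤ) ≤ 1

namespace IRL
open Finset

section avg
variable {Ω β γ : Type*} [Fintype Ω]

/-- averaging over the fibres of a label function -/
noncomputable def avg (l : Ω → β) (f : Ω → ℝ) (p : Ω) : ℝ :=
  (∑ q, if l q = l p then f q else 0) / (∑ q, if l q = l p then (1:ℝ) else 0)

lemma den_pos (l : Ω → β) (p : Ω) : 0 < ∑ q, if l q = l p then (1:ℝ) else 0 := by
  apply Finset.sum_pos'
  · intro i _; split_ifs <;> norm_num
  · exact ⟨p, mem_univ _, by simp⟩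

lemma avg_congr (l : Ω → β) (f : Ω → ℝ) {p q : Ω} (h : l p = l q) : avg l f p = avg l f q := by
  unfold avg; rw [h]

lemma avg_of_meas (l : Ω → β) (g : Ω → ℝ) (hg : ∀ p q, l p = l q → g p = g q) (p : Ω) :
    avg l g p = g p := by
  unfold avg
  rw [div_eq_iff (den_pos l p).ne', Finset.mul_sum]
  apply Finset.sum_congr rfl
  intro q _
  by_cases h : l q = l p
  · simp [h, hg q p h]
  · simp [h]

lemma avg_adj (l : Ω → β) (f g : Ω → ℝ) :
    ∑ p, avg l f p * g p = ∑ p, f p * avg l g p := by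
  have e1 : ∀ p, avg l f p * g p = ∑ q, (if l q = l p then f q * g p / (∑ q, if l q = l p then (1:ℝ) else 0) else 0) := by
    intro p
    unfold avg
    rw [div_mul_eq_mul_div, Finset.sum_mul, Finset.sum_div]
    apply Finset.sum_congr rfl
    intro q _
    split_ifs <;> simp
  have e2 : ∀ p, f p * avg l g p = ∑ q, (if l q = l p then f p * g q / (∑ q, if l q = l p then (1:ℝ) else 0) else 0) := by
    intro p
    unfold avg
    rw [mul_div_assoc', Finset.mul_sum, Finset.sum_div]
    apply Finset.sum_congr rfl
    intro q _
    split_ifs <;> simp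
  simp_rw [e1, e2]
  rw [Finset.sum_comm]
  apply Finset.sum_congr rfl
  intro p _
  apply Finset.sum_congr rfl
  intro q _
  by_cases h : l q = l p
  · simp [h]
  · simp [h, Ne.symm h]

lemma avg_nonneg (l : Ω → β) (f : Ω → ℝ) (hf : ∀ p, 0 ≤ f p) (p : Ω) : 0 ≤ avg l f p := by
  unfold avg
  apply div_nonneg _ (den_pos l p).le
  apply Finset.sum_nonneg; intro q _; split_ifs; exacts [hf q, le_rfl]

lemma avg_le_one (l : Ω → β) (f : Ω → ℝ) (hf : ∀ p, f p ≤ 1) (p : Ω) : avg l f p ≤ 1 := by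
  unfold avg
  rw [div_le_one (den_pos l p)]
  apply Finset.sum_le_sum; intro q _; split_ifs; exacts [hf q, le_rfl]

lemma avg_energy (l : Ω → β) (l' : Ω → γ) (hl : ∀ p q, l' p = l' q → l p = l q) (f : Ω → ℝ) :
    ∑ p, (avg l' f p - avg l f p)^2 = ∑ p, (avg l' f p)^2 - ∑ p, (avg l f p)^2 := by
  have h1 : ∑ p, avg l' f p * avg l f p = ∑ p, f p * avg l f p := by
    rw [avg_adj]
    apply Finset.sum_congr rfl; intro p _
    rw [avg_of_meas l' _ (fun p q h => avg_congr l f (hl p q h))]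
  have h2 : ∑ p, avg l f p * avg l f p = ∑ p, f p * avg l f p := by
    rw [avg_adj]
    apply Finset.sum_congr rfl; intro p _
    rw [avg_of_meas l _ (fun p q h => avg_congr l f h)]
  have h3 : ∑ p, (avg l' f p - avg l f p)^2 = ∑ p, (avg l' f p)^2 - 2 * ∑ p, avg l' f p * avg l f p
      + ∑ p, avg l f p * avg l f p := by
    rw [Finset.mul_sum, ← Finset.sum_sub_distrib, ← Finset.sum_add_distrib]
    apply Finset.sum_congr rfl; intro p _; ring
  have h4 : ∑ p, (avg l f p)^2 = ∑ p, avg l f p * avg l f p :=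
    Finset.sum_congr rfl (fun p _ => by ring)
  rw [h3, h4, h1, h2]; ring

lemma avg_disc (l : Ω → β) (l' : Ω → γ) (hl : ∀ p q, l' p = l' q → l p = l q) (f g : Ω → ℝ)
    (hg : ∀ p q, l' p = l' q → g p = g q) (hg1 : ∀ p, (g p)^2 ≤ 1) :
    (∑ p, (f p - avg l f p) * g p)^2 ≤
      Fintype.card Ω * (∑ p, (avg l' f p)^2 - ∑ p, (avg l f p)^2) := by
  have h1 : ∑ p, (f p - avg l f p) * g p = ∑ p, (avg l' f p - avg l f p) * g p := by
    have : ∑ p, avg l' f p * g p = ∑ p, f p * g p := by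
      rw [avg_adj]
      apply Finset.sum_congr rfl; intro p _
      rw [avg_of_meas l' g hg]
    simp only [sub_mul, Finset.sum_sub_distrib, this]
  rw [h1, ← avg_energy l l' hl]
  calc _ ≤ (∑ p, (avg l' f p - avg l f p)^2) * ∑ p, (g p)^2 := Finset.sum_mul_sq_le_sq_mul_sq _ _ _
    _ ≤ (∑ p, (avg l' f p - avg l f p)^2) * Fintype.card Ω := by
        gcongr
        calc ∑ p, (g p)^2 ≤ ∑ _p : Ω, (1:ℝ) := Finset.sum_le_sum (fun p _ => hg1 p)
          _ = _ := by simp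
    _ = _ := mul_comm _ _

/-- L¹ distance between averages and a label function -/
lemma avg_l1 [Fintype β] (l : Ω → β) (f : Ω → ℝ) (w : β → ℝ) :
    ∑ p, |avg l f p - w (l p)| =
      ∑ b, |(∑ p, if l p = b then f p else 0) - w b * ∑ p, if l p = b then (1:ℝ) else 0| := by
  rw [← Finset.sum_fiberwise (s := univ) (g := l)]
  apply Finset.sum_congr rfl
  intro b _
  by_cases hb : ∃ p, l p = b
  · obtain ⟨p0, rfl⟩ := hb
    have : ∀ p ∈ univ.filter (fun p => l p = l p0), |avg l f p - w (l p)| = |avg l f p0 - w (l p0)| := by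
      intro p hp
      have hp' : l p = l p0 := by simpa using hp
      rw [hp', avg_congr l f hp']
    rw [Finset.sum_congr rfl this, Finset.sum_const, nsmul_eq_mul]
    have hc : ((univ.filter (fun p => l p = l p0)).card : ℝ) = ∑ p, if l p = l p0 then (1:ℝ) else 0 := by
      simp
    have hd := den_pos l p0
    rw [hc]
    nth_rewrite 1 [← abs_of_pos hd]
    rw [← abs_mul]
    congr 1
    unfold avg
    field_simp
  · push Not at hb
    simp [hb]
end avg

/-- bilinear extension from sets to functions, one sided -/
lemma cut_ext_aux {V : Type*} [Fintype V] (g : V → V → ℝ) (D : ℝ)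
    (h : ∀ S T : Finset V, ∑ u ∈ S, ∑ v ∈ T, g u v ≤ D) (a b : V → ℝ)
    (ha : ∀ v, 0 ≤ a v ∧ a v ≤ 1) (hb : ∀ v, 0 ≤ b v ∧ b v ≤ 1) :
    ∑ u, ∑ v, g u v * (a u * b v) ≤ D := by
  have key : ∀ (G a : V → ℝ), (∀ v, 0 ≤ a v ∧ a v ≤ 1) →
      ∑ u, a u * G u ≤ ∑ u ∈ univ.filter (fun u => 0 ≤ G u), G u := by
    intro G a ha
    rw [Finset.sum_filter]
    apply Finset.sum_le_sum
    intro u _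
    split_ifs with hu
    · nlinarith [ha u]
    · push Not at hu; nlinarith [ha u]
  calc ∑ u, ∑ v, g u v * (a u * b v) = ∑ u, a u * (∑ v, g u v * b v) := by
        simp_rw [Finset.mul_sum]; congr! 2; ring
    _ ≤ _ := key _ a ha
    _ = ∑ v, b v * ∑ u ∈ univ.filter (fun u => 0 ≤ ∑ v, g u v * b v), g u v := by
        rw [Finset.sum_comm]; simp_rw [Finset.mul_sum]; congr! 2; ring
    _ ≤ _ := key _ b hb
    _ ≤ D := by rw [Finset.sum_comm]; exact h _ _

lemma cut_ext {V : Type*} [Fintype V] (g : V → V → ℝ) (D : ℝ)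
    (h : ∀ S T : Finset V, |∑ u ∈ S, ∑ v ∈ T, g u v| ≤ D) (a b : V → ℝ)
    (ha : ∀ v, 0 ≤ a v ∧ a v ≤ 1) (hb : ∀ v, 0 ≤ b v ∧ b v ≤ 1) :
    |∑ u, ∑ v, g u v * (a u * b v)| ≤ D := by
  rw [abs_le]
  constructor
  · have := cut_ext_aux (fun u v => - g u v) D (fun S T => by
      simp only [Finset.sum_neg_distrib]; linarith [(abs_le.1 (h S T)).1]) a b ha hb
    simp only [neg_mul, Finset.sum_neg_distrib] at this
    linarith
  · exact cut_ext_aux g D (fun S T => (abs_le.1 (h S T)).2) a b ha hb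

abbrev Q := Bool × Bool
abbrev X := ℕ → Q

/-- truncation of a label sequence -/
def lab (t : ℕ) (x : X) : Fin t → Q := fun i => x i

/-- pair label at level t -/
def plab (t : ℕ) (p : X × X) : (Fin t → Q) × (Fin t → Q) := (lab t p.1, lab t p.2)

lemma lab_eq_iff (t : ℕ) (x y : X) : lab t x = lab t y ↔ ∀ i < t, x i = y i := by
  constructor
  · intro h i hi; exact congrFun h ⟨i, hi⟩
  · intro h; funext i; exact h i i.2

/-- Greedy weak regularity. -/
lemma greedy {V : Type*} [Fintype V] (f : Fin 3 → V × V → ℝ) :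
    ∃ φ : V → X, ∀ (t : ℕ) (h : Fin 3) (S T : Finset V),
      (∑ p : V × V, (f h p - avg (fun p : V × V => plab t (φ p.1, φ p.2)) (f h) p) *
        (if p.1 ∈ S ∧ p.2 ∈ T then 1 else 0))^2 ≤
      (Fintype.card V : ℝ)^2 * ∑ h', (∑ p, (avg (fun p : V × V => plab (t+1) (φ p.1, φ p.2)) (f h') p)^2
        - ∑ p, (avg (fun p : V × V => plab t (φ p.1, φ p.2)) (f h') p)^2) := by
  have hmax : ∀ (t : ℕ) (σ : V → X), ∃ z : Fin 3 × Finset V × Finset V, ∀ z' : Fin 3 × Finset V × Finset V,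
      (∑ p : V × V, (f z'.1 p - avg (fun p : V × V => plab t (σ p.1, σ p.2)) (f z'.1) p) *
        (if p.1 ∈ z'.2.1 ∧ p.2 ∈ z'.2.2 then 1 else 0))^2 ≤
      (∑ p : V × V, (f z.1 p - avg (fun p : V × V => plab t (σ p.1, σ p.2)) (f z.1) p) *
        (if p.1 ∈ z.2.1 ∧ p.2 ∈ z.2.2 then 1 else 0))^2 := fun t σ => Finite.exists_max _
  choose z hz using hmax
  let σ : ℕ → V → X := fun t => Nat.rec (fun _ _ => (false, false))
    (fun t s v => Function.update (s v) t (decide (v ∈ (z t s).2.1), decide (v ∈ (z t s).2.2))) t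
  have hσ : ∀ t v, σ (t+1) v = Function.update (σ t v) t
    (decide (v ∈ (z t (σ t)).2.1), decide (v ∈ (z t (σ t)).2.2)) := fun t v => rfl
  let φ : V → X := fun v i => σ (i+1) v i
  have hφ : ∀ t v i, i < t → σ t v i = φ v i := by
    intro t
    induction t with
    | zero => intro v i hi; omega
    | succ t ih =>
      intro v i hi
      rcases Nat.lt_succ_iff_lt_or_eq.1 hi with h | h
      · rw [hσ, Function.update_of_ne h.ne, ih v i h]
      · subst h; rfl
  have hφb : ∀ t v, φ v t = (decide (v ∈ (z t (σ t)).2.1), decide (v ∈ (z t (σ t)).2.2)) := by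
    intro t v; show σ (t+1) v t = _; rw [hσ]; simp
  have hlab : ∀ t v, lab t (σ t v) = lab t (φ v) := by
    intro t v; rw [lab_eq_iff]; intro i hi; exact hφ t v i hi
  have hplab : ∀ t, (fun p : V × V => plab t (σ t p.1, σ t p.2)) =
      (fun p : V × V => plab t (φ p.1, φ p.2)) := by
    intro t; funext p; simp [plab, hlab]
  refine ⟨φ, fun t h S T => ?_⟩
  have h1 := hz t (σ t) (h, S, T)
  rw [hplab] at h1
  refine h1.trans ?_
  have href : ∀ p q : V × V, plab (t+1) (φ p.1, φ p.2) = plab (t+1) (φ q.1, φ q.2) →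
      plab t (φ p.1, φ p.2) = plab t (φ q.1, φ q.2) := by
    intro p q h
    simp only [plab, Prod.mk.injEq, lab_eq_iff] at h ⊢
    exact ⟨fun i hi => h.1 i (by omega), fun i hi => h.2 i (by omega)⟩
  refine (avg_disc _ (fun p : V × V => plab (t+1) (φ p.1, φ p.2)) href _ _ ?_ ?_).trans ?_
  · intro p q h
    simp only [plab, Prod.mk.injEq, lab_eq_iff] at h
    have a1 := h.1 t (by omega)
    have a2 := h.2 t (by omega)
    rw [hφb, hφb, Prod.mk.injEq, decide_eq_decide, decide_eq_decide] at a1 a2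
    simp only [a1.1, a2.2]
  · intro p; split_ifs <;> norm_num
  · rw [Fintype.card_prod]; push_cast; rw [← sq]
    apply mul_le_mul_of_nonneg_left _ (by positivity)
    apply Finset.single_le_sum (f := fun h' => (∑ p, (avg (fun p : V × V => plab (t+1) (φ p.1, φ p.2)) (f h') p)^2
        - ∑ p, (avg (fun p : V × V => plab t (φ p.1, φ p.2)) (f h') p)^2)) _ (Finset.mem_univ _)
    intro h' _
    rw [← avg_energy _ _ href]
    positivity

lemma weakreg {V : Type*} [Fintype V] (f : Fin 3 → V × V → ℝ) (hf : ∀ h p, 0 ≤ f h p ∧ f h p ≤ 1) :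
    ∃ φ : V → X, ∀ (s m : ℕ), 0 < m → ∃ t, t < m ∧ ∀ (h : Fin 3) (a b : V → ℝ),
      (∀ v, 0 ≤ a v ∧ a v ≤ 1) → (∀ v, 0 ≤ b v ∧ b v ≤ 1) →
      |∑ u, ∑ v, (f h (u, v) - avg (fun p : V × V => plab (s + t) (φ p.1, φ p.2)) (f h) (u, v)) * (a u * b v)|
        ≤ Real.sqrt (3 / m) * (Fintype.card V : ℝ)^2 := by
  obtain ⟨φ, hφ⟩ := greedy f
  refine ⟨φ, fun s m hm => ?_⟩
  let en : ℕ → ℝ := fun t => ∑ h', ∑ p, (avg (fun p : V × V => plab t (φ p.1, φ p.2)) (f h') p)^2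
  have hen0 : ∀ t, 0 ≤ en t := fun t => by positivity
  have hen1 : ∀ t, en t ≤ 3 * (Fintype.card V : ℝ)^2 := by
    intro t
    calc en t ≤ ∑ _h' : Fin 3, ∑ _p : V × V, (1:ℝ) := by
          apply Finset.sum_le_sum; intro h _; apply Finset.sum_le_sum; intro p _
          have a1 := avg_nonneg (fun p : V × V => plab t (φ p.1, φ p.2)) (f h) (fun p => (hf h p).1) p
          have a2 := avg_le_one (fun p : V × V => plab t (φ p.1, φ p.2)) (f h) (fun p => (hf h p).2) p
          nlinarith
      _ = _ := by simp; ring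
  have hex : ∃ t < m, en (s + t + 1) - en (s + t) ≤ 3 * (Fintype.card V : ℝ)^2 / m := by
    by_contra! hcon
    have hsum : ∑ t ∈ Finset.range m, (en (s + (t + 1)) - en (s + t)) = en (s + m) - en s :=
      Finset.sum_range_sub (fun t => en (s + t)) m
    have : ∑ t ∈ Finset.range m, (3 * (Fintype.card V : ℝ)^2 / m) < ∑ t ∈ Finset.range m, (en (s + (t + 1)) - en (s + t)) := by
      apply Finset.sum_lt_sum_of_nonempty
      · simpa using hm.ne'
      · intro t ht; exact hcon t (by simpa using ht)
    rw [hsum] at this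
    have hm' : (m:ℝ) ≠ 0 := by positivity
    simp only [Finset.sum_const, Finset.card_range, nsmul_eq_mul] at this
    rw [mul_div_cancel₀ _ hm'] at this
    linarith [hen1 (s + m), hen0 s]
  obtain ⟨t, htm, ht⟩ := hex
  refine ⟨t, htm, fun h a b ha hb => ?_⟩
  apply cut_ext (fun u v => f h (u, v) - avg (fun p : V × V => plab (s + t) (φ p.1, φ p.2)) (f h) (u, v)) _ _ a b ha hb
  intro S T
  have h1 := hφ (s + t) h S T
  rw [Finset.sum_sub_distrib] at h1
  have h2 : ∑ p : V × V, (f h p - avg (fun p : V × V => plab (s+t) (φ p.1, φ p.2)) (f h) p) *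
        (if p.1 ∈ S ∧ p.2 ∈ T then 1 else 0) = ∑ u ∈ S, ∑ v ∈ T, (f h (u, v) - avg (fun p : V × V => plab (s + t) (φ p.1, φ p.2)) (f h) (u, v)) := by
    rw [← Finset.sum_product', Fintype.sum_prod_type, ← Fintype.sum_prod_type']
    simp only [mul_ite, mul_one, mul_zero]
    rw [← Finset.sum_filter]
    apply Finset.sum_congr _ (fun _ _ => rfl)
    ext p; simp
  rw [h2] at h1
  apply abs_le_of_sq_le_sq _ (by positivity)
  rw [mul_pow, Real.sq_sqrt (by positivity)]
  refine h1.trans ?_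
  calc (Fintype.card V : ℝ)^2 * (en (s + t + 1) - en (s + t)) ≤ (Fintype.card V : ℝ)^2 * (3 * (Fintype.card V : ℝ)^2 / m) := by gcongr
    _ = _ := by ring

end IRL

namespace IRL
open Finset

/-- the ordered pairs of `Fin k` -/
def pairs (k : ℕ) : Finset (Fin k × Fin k) := univ.filter (fun p => p.1 < p.2)

lemma sum_update {V : Type*} [Fintype V] {k : ℕ} (a : Fin k) (Φ : (Fin k → V) → ℝ) :
    ∑ v : Fin k → V, ∑ x : V, Φ (Function.update v a x) = Fintype.card V * ∑ v, Φ v := by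
  rw [← Fintype.sum_prod_type' (fun (v : Fin k → V) (x : V) => Φ (Function.update v a x))]
  have : ∑ q : (Fin k → V) × V, Φ (Function.update q.1 a q.2) = ∑ q : (Fin k → V) × V, Φ q.1 := by
    apply Finset.sum_nbij' (fun q => (Function.update q.1 a q.2, q.1 a))
      (fun q => (Function.update q.1 a q.2, q.1 a))
    · simp
    · simp
    · rintro ⟨v, x⟩ _; simp
    · rintro ⟨v, x⟩ _; simp
    · rintro ⟨v, x⟩ _; simp
  rw [this, Fintype.sum_prod_type]
  simp [Finset.mul_sum]

lemma sum_update2 {V : Type*} [Fintype V] {k : ℕ} (a b : Fin k) (Φ : (Fin k → V) → ℝ) :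
    ∑ v : Fin k → V, ∑ x : V, ∑ y : V, Φ (Function.update (Function.update v a x) b y) =
      (Fintype.card V : ℝ)^2 * ∑ v, Φ v := by
  rw [sum_update a (fun v => ∑ y : V, Φ (Function.update v b y)), sum_update]; ring

lemma prod_mem01 {α : Type*} (s : Finset α) (F : α → ℝ) (h : ∀ q ∈ s, 0 ≤ F q ∧ F q ≤ 1) :
    0 ≤ ∏ q ∈ s, F q ∧ ∏ q ∈ s, F q ≤ 1 :=
  ⟨Finset.prod_nonneg (fun q hq => (h q hq).1),
   Finset.prod_le_one (fun q hq => (h q hq).1) (fun q hq => (h q hq).2)⟩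

lemma count_basic {V : Type*} [Fintype V] [Nonempty V] {k : ℕ} (p : Fin k × Fin k) (hp : p.1 < p.2)
    (g : V → V → ℝ) (D : ℝ)
    (hg : ∀ a b : V → ℝ, (∀ v, 0 ≤ a v ∧ a v ≤ 1) → (∀ v, 0 ≤ b v ∧ b v ≤ 1) →
      |∑ u, ∑ v, g u v * (a u * b v)| ≤ D * (Fintype.card V : ℝ)^2)
    (K : Fin k × Fin k → V → V → ℝ) (hK : ∀ q u v, 0 ≤ K q u v ∧ K q u v ≤ 1) :
    |∑ v : Fin k → V, g (v p.1) (v p.2) * ∏ q ∈ (pairs k).erase p, K q (v q.1) (v q.2)|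
      ≤ D * (Fintype.card V : ℝ)^k := by
  have hc : 0 < (Fintype.card V : ℝ)^2 := by
    have : 0 < Fintype.card V := Fintype.card_pos
    positivity
  rw [← mul_le_mul_iff_right₀ hc, ← abs_of_pos hc, ← abs_mul, abs_of_pos hc,
    ← sum_update2 p.1 p.2]
  have hinner : ∀ v : Fin k → V, |∑ x : V, ∑ y : V,
      g (Function.update (Function.update v p.1 x) p.2 y p.1) (Function.update (Function.update v p.1 x) p.2 y p.2)
      * ∏ q ∈ (pairs k).erase p, K q (Function.update (Function.update v p.1 x) p.2 y q.1)
        (Function.update (Function.update v p.1 x) p.2 y q.2)| ≤ D * (Fintype.card V : ℝ)^2 := by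
    intro v
    have := hg (fun x => ∏ q ∈ (pairs k).erase p with ¬ (q.1 = p.2 ∨ q.2 = p.2),
        K q (Function.update v p.1 x q.1) (Function.update v p.1 x q.2))
      (fun y => ∏ q ∈ (pairs k).erase p with (q.1 = p.2 ∨ q.2 = p.2),
        K q (Function.update v p.2 y q.1) (Function.update v p.2 y q.2))
      (fun x => prod_mem01 _ _ (fun q _ => hK _ _ _)) (fun x => prod_mem01 _ _ (fun q _ => hK _ _ _))
    refine le_trans (le_of_eq ?_) this
    congr 1
    apply Finset.sum_congr rfl; intro x _
    apply Finset.sum_congr rfl; intro y _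
    rw [Function.update_self, Function.update_of_ne hp.ne, Function.update_self]
    congr 1
    rw [← Finset.prod_filter_not_mul_prod_filter ((pairs k).erase p) (fun q => q.1 = p.2 ∨ q.2 = p.2)]
    congr 1
    · apply Finset.prod_congr rfl
      intro q hq
      simp only [Finset.mem_filter, not_or] at hq
      rw [Function.update_of_ne hq.2.1, Function.update_of_ne hq.2.2]
    · apply Finset.prod_congr rfl
      intro q hq
      simp only [Finset.mem_filter, Finset.mem_erase, pairs, Finset.mem_univ, true_and] at hq
      obtain ⟨⟨hqp, hlt⟩, hq⟩ := hq
      have h1 : q.1 ≠ p.1 := by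
        rcases hq with h | h
        · rw [h]; exact hp.ne'
        · intro h'; exact hqp (Prod.ext h' h)
      have h2 : q.2 ≠ p.1 := by
        rcases hq with h | h
        · intro h'; rw [h, h'] at hlt; exact absurd hlt (not_lt.2 hp.le)
        · rw [h]; exact hp.ne'
      rw [Function.update_comm hp.ne, Function.update_of_ne h1, Function.update_of_ne h2]
  calc _ ≤ ∑ v : Fin k → V, D * (Fintype.card V : ℝ)^2 :=
        (Finset.abs_sum_le_sum_abs _ _).trans (Finset.sum_le_sum (fun v _ => hinner v))
    _ = _ := by simp; ring

lemma counting {V : Type*} [Fintype V] [Nonempty V] {k : ℕ}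
    (F G : Fin k × Fin k → V → V → ℝ) (D : ℝ)
    (hF : ∀ q u v, 0 ≤ F q u v ∧ F q u v ≤ 1) (hG : ∀ q u v, 0 ≤ G q u v ∧ G q u v ≤ 1)
    (hFG : ∀ q, ∀ a b : V → ℝ, (∀ v, 0 ≤ a v ∧ a v ≤ 1) → (∀ v, 0 ≤ b v ∧ b v ≤ 1) →
      |∑ u, ∑ v, (F q u v - G q u v) * (a u * b v)| ≤ D * (Fintype.card V : ℝ)^2) :
    |∑ v : Fin k → V, ∏ q ∈ pairs k, F q (v q.1) (v q.2) -
      ∑ v : Fin k → V, ∏ q ∈ pairs k, G q (v q.1) (v q.2)|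
      ≤ (pairs k).card * D * (Fintype.card V : ℝ)^k := by
  have key : ∀ s : Finset (Fin k × Fin k), s ⊆ pairs k →
    |∑ v : Fin k → V, ∏ q ∈ pairs k, (if q ∈ s then F q else G q) (v q.1) (v q.2) -
      ∑ v : Fin k → V, ∏ q ∈ pairs k, G q (v q.1) (v q.2)|
      ≤ s.card * D * (Fintype.card V : ℝ)^k := by
    intro s
    induction s using Finset.induction_on with
    | empty => intro _; simp
    | insert p s hps ih =>
      intro hs
      have hpk : p ∈ pairs k := hs (Finset.mem_insert_self _ _)
      have hplt : p.1 < p.2 := by simpa [pairs] using hpk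
      have ih' := ih (fun x hx => hs (Finset.mem_insert_of_mem hx))
      have hb := count_basic p hplt (fun u v => F p u v - G p u v) D (hFG p)
        (fun q => if q ∈ s then F q else G q) (fun q u v => by
          split_ifs; exacts [hF q u v, hG q u v])
      have heq : ∑ v : Fin k → V, ∏ q ∈ pairs k, (if q ∈ insert p s then F q else G q) (v q.1) (v q.2)
         = ∑ v : Fin k → V, ∏ q ∈ pairs k, (if q ∈ s then F q else G q) (v q.1) (v q.2) +
          ∑ v : Fin k → V, (F p (v p.1) (v p.2) - G p (v p.1) (v p.2)) *
            ∏ q ∈ (pairs k).erase p, (if q ∈ s then F q else G q) (v q.1) (v q.2) := by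
        rw [← Finset.sum_add_distrib]
        apply Finset.sum_congr rfl; intro v _
        rw [← Finset.mul_prod_erase _ _ hpk, ← Finset.mul_prod_erase _ _ hpk]
        have : ∏ q ∈ (pairs k).erase p, (if q ∈ insert p s then F q else G q) (v q.1) (v q.2) =
            ∏ q ∈ (pairs k).erase p, (if q ∈ s then F q else G q) (v q.1) (v q.2) := by
          apply Finset.prod_congr rfl
          intro q hq
          have : q ≠ p := (Finset.mem_erase.1 hq).1
          simp [Finset.mem_insert, this]
        rw [this]
        simp only [Finset.mem_insert_self, if_true, hps, if_false]
        ring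
      rw [heq, add_sub_right_comm]
      refine (abs_add_le _ _).trans ?_
      rw [Finset.card_insert_of_notMem hps]
      push_cast
      linarith
  have := key (pairs k) subset_rfl
  have heq : ∀ v : Fin k → V, ∏ q ∈ pairs k, (if q ∈ pairs k then F q else G q) (v q.1) (v q.2) =
      ∏ q ∈ pairs k, F q (v q.1) (v q.2) := by
    intro v; apply Finset.prod_congr rfl; intro q hq; simp [hq]
  simpa only [heq] using this

/-- pointwise telescoping -/
lemma prod_sub_le {α : Type*} (s : Finset α) (F G : α → ℝ) (hF : ∀ q, 0 ≤ F q ∧ F q ≤ 1)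
    (hG : ∀ q, 0 ≤ G q ∧ G q ≤ 1) :
    |∏ q ∈ s, F q - ∏ q ∈ s, G q| ≤ ∑ q ∈ s, |F q - G q| := by
  induction s using Finset.induction_on with
  | empty => simp
  | insert p s hps ih =>
    rw [Finset.prod_insert hps, Finset.prod_insert hps, Finset.sum_insert hps]
    have : F p * ∏ q ∈ s, F q - G p * ∏ q ∈ s, G q =
      (F p - G p) * ∏ q ∈ s, F q + G p * (∏ q ∈ s, F q - ∏ q ∈ s, G q) := by ring
    rw [this]
    refine (abs_add_le _ _).trans ?_
    rw [abs_mul, abs_mul]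
    have h1 := prod_mem01 s F (fun q _ => hF q)
    rw [abs_of_nonneg h1.1, abs_of_nonneg (hG p).1]
    nlinarith [abs_nonneg (F p - G p), abs_nonneg (∏ q ∈ s, F q - ∏ q ∈ s, G q), h1.2, (hG p).2, (hG p).1]

end IRL

namespace IRL
open Finset MeasureTheory Filter Topology

noncomputable section

instance instBX : BorelSpace X := inferInstance
instance instSX : SecondCountableTopology X := inferInstance
instance instBXX : BorelSpace (X × X) := inferInstance
instance instOXX : OpensMeasurableSpace (X × X) := inferInstance
instance instSXX : SecondCountableTopology (X × X) := inferInstance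
instance instBXF : BorelSpace (X × Fin 3) := inferInstance
instance instSXF : SecondCountableTopology (X × Fin 3) := inferInstance
instance instBXXF : BorelSpace (X × X × Fin 3) := Prod.borelSpace
instance instOXXF : OpensMeasurableSpace (X × X × Fin 3) := inferInstance

/-- uniform probability measure -/
def unif (n : ℕ) : Measure (Fin n) := (n : ENNReal)⁻¹ • Measure.count

lemma unif_prob (n : ℕ) (hn : 0 < n) : IsProbabilityMeasure (unif n) := by
  constructor
  simp only [unif, Measure.smul_apply, smul_eq_mul, Measure.count_univ]
  simp
  exact ENNReal.inv_mul_cancel (by exact_mod_cast hn.ne') (by simp)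

lemma unif_singleton (n : ℕ) (x : Fin n) : unif n {x} = (n : ENNReal)⁻¹ := by
  simp [unif]

lemma integral_pi_unif (n k : ℕ) (hn : 0 < n) (F : (Fin k → Fin n) → ℝ) :
    ∫ v, F v ∂(Measure.pi fun _ : Fin k => unif n) = (∑ v, F v) / (n:ℝ)^k := by
  have := unif_prob n hn
  rw [integral_fintype (.of_finite), Finset.sum_div]
  apply Finset.sum_congr rfl
  intro v _
  rw [Measure.real, Measure.pi_singleton]
  simp [unif_singleton]
  field_simp

lemma integral_prod_unif (n : ℕ) (hn : 0 < n) (F : Fin n × Fin n → ℝ) :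
    ∫ v, F v ∂((unif n).prod (unif n)) = (∑ v, F v) / (n:ℝ)^2 := by
  have := unif_prob n hn
  rw [integral_fintype (.of_finite), Finset.sum_div]
  apply Finset.sum_congr rfl
  rintro ⟨u, v⟩ _
  rw [Measure.real, ← Set.singleton_prod_singleton, Measure.prod_prod]
  simp [unif_singleton]
  field_simp

lemma limit_exists (𝒰 : Ultrafilter ℕ) (N : ℕ → ℕ) (hN : ∀ m, 0 < N m)
    (c : ∀ m, Fin (N m) → Fin (N m) → Fin 3) (φ : ∀ m, Fin (N m) → X) :
    ∃ (μ : Measure X) (_ : IsProbabilityMeasure μ) (W : Fin 3 → X × X → ℝ),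
      (∀ h, Measurable (W h)) ∧ (∀ h p, 0 ≤ W h p ∧ W h p ≤ 1) ∧
      (∀ k (F : (Fin k → X) → ℝ), Continuous F →
        Tendsto (fun m => (∑ v : Fin k → Fin (N m), F (fun a => φ m (v a))) / (N m:ℝ)^k) 𝒰
          (𝓝 (∫ x, F x ∂(Measure.pi fun _ => μ)))) ∧
      (∀ h (F : X × X → ℝ), Continuous F →
        Tendsto (fun m => (∑ p : Fin (N m) × Fin (N m),
          if c m p.1 p.2 = h then F (φ m p.1, φ m p.2) else 0) / (N m : ℝ)^2) 𝒰
          (𝓝 (∫ p, F p * W h p ∂(μ.prod μ)))) ∧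
      (∀ (F : X × X → ℝ), Continuous F →
        Tendsto (fun m => (∑ p : Fin (N m) × Fin (N m), F (φ m p.1, φ m p.2)) / (N m : ℝ)^2) 𝒰
          (𝓝 (∫ p, F p ∂(μ.prod μ)))) ∧
      (∀ᵐ p ∂(μ.prod μ), ∃ h, 0 < W h p) := by
  have hU : ∀ m, IsProbabilityMeasure (unif (N m)) := fun m => unif_prob _ (hN m)
  let U : ∀ m, ProbabilityMeasure (Fin (N m)) := fun m => ⟨unif (N m), hU m⟩
  have mφ : ∀ m, Measurable (φ m) := fun m => measurable_of_finite _
  let μs : ℕ → ProbabilityMeasure X := fun m => (U m).map (mφ m).aemeasurable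
  let e : ∀ m, Fin (N m) × Fin (N m) → X × X × Fin 3 := fun m p => (φ m p.1, φ m p.2, c m p.1 p.2)
  have me : ∀ m, Measurable (e m) := fun m => measurable_of_finite _
  let ρs : ℕ → ProbabilityMeasure (X × X × Fin 3) := fun m => ((U m).prod (U m)).map (me m).aemeasurable
  obtain ⟨μ, hμ⟩ : ∃ μ : ProbabilityMeasure X, Tendsto μs 𝒰 (𝓝 μ) :=
    ⟨_, (𝒰.map μs).le_nhds_lim⟩
  obtain ⟨ρ, hρ⟩ : ∃ ρ : ProbabilityMeasure (X × X × Fin 3), Tendsto ρs 𝒰 (𝓝 ρ) :=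
    ⟨_, (𝒰.map ρs).le_nhds_lim⟩
  let π : X × X × Fin 3 → X × X := fun z => (z.1, z.2.1)
  have cπ : Continuous π := by fun_prop
  have mπ : Measurable π := cπ.measurable
  have hmarg : ρ.map mπ.aemeasurable = μ.prod μ := by
    have h1 := ProbabilityMeasure.tendsto_map_of_tendsto_of_continuous ρs ρ hρ cπ
    have h2 : Tendsto (fun m => (μs m).prod (μs m)) 𝒰 (𝓝 (μ.prod μ)) :=
      (ProbabilityMeasure.continuous_prod.tendsto (μ, μ)).comp (hμ.prodMk_nhds hμ)
    refine tendsto_nhds_unique (h1.congr (fun m => ?_)) h2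
    apply Subtype.ext
    show ((((unif (N m)).prod (unif (N m))).map (e m)).map π) = ((unif (N m)).map (φ m)).prod ((unif (N m)).map (φ m))
    rw [Measure.map_map mπ (me m), Measure.map_prod_map _ _ (mφ m) (mφ m)]
    rfl
  have hmarg' : (ρ : Measure (X × X × Fin 3)).map π = (μ : Measure X).prod (μ : Measure X) := by
    have := congrArg (fun z : ProbabilityMeasure (X × X) => (z : Measure (X × X))) hmarg
    simpa using this
  let R : Fin 3 → Measure (X × X) := fun h => ((ρ : Measure (X × X × Fin 3)).restrict {z | z.2.2 = h}).map π
  have hRle : ∀ h, R h ≤ (μ : Measure X).prod (μ : Measure X) := by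
    intro h
    rw [← hmarg']
    exact Measure.map_mono Measure.restrict_le_self mπ
  have hRf : ∀ h, IsFiniteMeasure (R h) := fun h => isFiniteMeasure_of_le _ (hRle h)
  have hRac : ∀ h, R h ≪ (μ : Measure X).prod (μ : Measure X) := fun h => Measure.absolutelyContinuous_of_le (hRle h)
  have hLD : ∀ h, (R h).HaveLebesgueDecomposition ((μ : Measure X).prod (μ : Measure X)) := fun h =>
    Measure.haveLebesgueDecomposition_of_sigmaFinite _ _
  let W : Fin 3 → X × X → ℝ := fun h p =>
    min 1 (((R h).rnDeriv ((μ : Measure X).prod (μ : Measure X))) p).toReal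
  have hle1 : ∀ h, ∀ᵐ p ∂((μ : Measure X).prod (μ : Measure X)),
      (R h).rnDeriv ((μ : Measure X).prod (μ : Measure X)) p ≤ 1 := fun h => Measure.rnDeriv_le_one_of_le (hRle h)
  have hWae : ∀ h, ∀ᵐ p ∂((μ : Measure X).prod (μ : Measure X)),
      W h p = ((R h).rnDeriv ((μ : Measure X).prod (μ : Measure X)) p).toReal := by
    intro h
    filter_upwards [hle1 h] with p hp
    apply min_eq_right
    exact ENNReal.toReal_le_of_le_ofReal zero_le_one (by simpa using hp)
  have hWm : ∀ h, Measurable (W h) := by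
    intro h
    exact measurable_const.min (Measure.measurable_rnDeriv _ _).ennreal_toReal
  refine ⟨μ, inferInstance, W, hWm, fun h p => ⟨le_min zero_le_one ENNReal.toReal_nonneg, min_le_left _ _⟩, ?_, ?_, ?_, ?_⟩
  · intro k F hF
    have h1 : Tendsto (fun m => ProbabilityMeasure.pi (fun _ : Fin k => μs m)) 𝒰
        (𝓝 (ProbabilityMeasure.pi (fun _ : Fin k => μ))) :=
      (ProbabilityMeasure.continuous_pi.tendsto (fun _ : Fin k => μ)).comp (tendsto_pi_nhds.2 (fun _ => hμ))
    have h2 := (ProbabilityMeasure.tendsto_iff_forall_integral_tendsto.1 h1)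
      (BoundedContinuousFunction.mkOfCompact ⟨F, hF⟩)
    refine h2.congr (fun m => ?_)
    rw [← integral_pi_unif _ _ (hN m)]
    show ∫ x, F x ∂(Measure.pi (fun _ : Fin k => (unif (N m)).map (φ m))) = _
    rw [← Measure.pi_map_pi (fun _ => (mφ m).aemeasurable), integral_map]
    · exact (measurable_of_finite _).aemeasurable
    · exact hF.aestronglyMeasurable
  · intro h F hF
    let G : X × X × Fin 3 → ℝ := fun z => if z.2.2 = h then F (π z) else 0
    have hG : Continuous G := by
      have : G = fun z => (if z.2.2 = h then (1:ℝ) else 0) * F (π z) := by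
        funext z; simp only [G]; split_ifs <;> simp
      rw [this]
      apply Continuous.mul _ (hF.comp cπ)
      exact (continuous_of_discreteTopology (f := fun i : Fin 3 => if i = h then (1:ℝ) else 0)).comp
        (continuous_snd.comp continuous_snd)
    have h2 := (ProbabilityMeasure.tendsto_iff_forall_integral_tendsto.1 hρ)
      (BoundedContinuousFunction.mkOfCompact ⟨G, hG⟩)
    have h3 : ∫ z, G z ∂(ρ : Measure (X × X × Fin 3)) = ∫ p, F p * W h p ∂((μ : Measure X).prod (μ : Measure X)) := by
      have e1 : ∫ z, G z ∂(ρ : Measure (X × X × Fin 3)) = ∫ p, F p ∂(R h) := by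
        rw [integral_map mπ.aemeasurable hF.aestronglyMeasurable]
        have hms : MeasurableSet {z : X × X × Fin 3 | z.2.2 = h} :=
          (measurable_snd.comp measurable_snd) (measurableSet_singleton h)
        rw [← integral_indicator hms]
        apply integral_congr_ae
        filter_upwards with z
        by_cases hz : z.2.2 = h
        · simp [G, hz]
        · simp [G, hz]
      rw [e1, ← integral_rnDeriv_smul (hRac h)]
      apply integral_congr_ae
      filter_upwards [hWae h] with p hp
      rw [hp, smul_eq_mul, mul_comm]
    rw [← h3]
    refine h2.congr (fun m => ?_)
    rw [← integral_prod_unif _ (hN m)]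
    show ∫ x, G x ∂(((unif (N m)).prod (unif (N m))).map (e m)) = _
    rw [integral_map (me m).aemeasurable hG.aestronglyMeasurable]
  · intro F hF
    have h1 : Tendsto (fun m => (μs m).prod (μs m)) 𝒰 (𝓝 (μ.prod μ)) :=
      (ProbabilityMeasure.continuous_prod.tendsto (μ, μ)).comp (hμ.prodMk_nhds hμ)
    have h2 := (ProbabilityMeasure.tendsto_iff_forall_integral_tendsto.1 h1)
      (BoundedContinuousFunction.mkOfCompact ⟨F, hF⟩)
    refine h2.congr (fun m => ?_)
    rw [← integral_prod_unif _ (hN m)]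
    show ∫ x, F x ∂(((unif (N m)).map (φ m)).prod ((unif (N m)).map (φ m))) = _
    rw [Measure.map_prod_map _ _ (mφ m) (mφ m), integral_map (measurable_of_finite _).aemeasurable hF.aestronglyMeasurable]
    rfl
  · have hZm : MeasurableSet {p | ∀ h, W h p = 0} := by
      have : {p | ∀ h, W h p = 0} = ⋂ h, {p | W h p = 0} := by ext; simp
      rw [this]
      exact MeasurableSet.iInter (fun h => hWm h (measurableSet_singleton 0))
    have hRZ : ∀ h, R h {p | ∀ h, W h p = 0} = 0 := by
      intro h
      rw [← Measure.setLIntegral_rnDeriv (hRac h), setLIntegral_eq_zero_iff hZm (Measure.measurable_rnDeriv _ _)]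
      filter_upwards [hWae h, hle1 h] with p hp hp1 hpz
      rw [hpz h] at hp
      rcases (ENNReal.toReal_eq_zero_iff _).1 hp.symm with h0 | h0
      · exact h0
      · rw [h0] at hp1; simp at hp1
    have hZ0 : ((μ : Measure X).prod (μ : Measure X)) {p | ∀ h, W h p = 0} = 0 := by
      rw [← hmarg', Measure.map_apply mπ hZm]
      have hsub : π ⁻¹' {p | ∀ h, W h p = 0} ⊆ ⋃ h : Fin 3, (π ⁻¹' {p | ∀ h, W h p = 0} ∩ {z | z.2.2 = h}) := by
        intro z hz; simp only [Set.mem_iUnion]; exact ⟨z.2.2, hz, rfl⟩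
      refine measure_mono_null hsub (measure_iUnion_null (fun h => ?_))
      have := hRZ h
      rwa [Measure.map_apply mπ hZm, Measure.restrict_apply (mπ hZm)] at this
    have := measure_eq_zero_iff_ae_notMem.1 hZ0
    filter_upwards [this] with p hp
    simp only [not_forall] at hp
    obtain ⟨h, hh⟩ := hp
    exact ⟨h, lt_of_le_of_ne (le_min zero_le_one ENNReal.toReal_nonneg) (Ne.symm hh)⟩

end
end IRL

namespace IRL
open Finset MeasureTheory Filter Topology

noncomputable section

lemma measurable_lab (t : ℕ) : Measurable (lab t) := by
  unfold lab; fun_prop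

lemma continuous_lab (t : ℕ) : Continuous (lab t) := by
  unfold lab; fun_prop

lemma measurable_plab (t : ℕ) : Measurable (plab t) := by
  unfold plab; exact ((measurable_lab t).comp measurable_fst).prodMk ((measurable_lab t).comp measurable_snd)

lemma continuous_plab (t : ℕ) : Continuous (plab t) := by
  unfold plab; exact ((continuous_lab t).comp continuous_fst).prodMk ((continuous_lab t).comp continuous_snd)

lemma continuous_comp_plab (t : ℕ) (w : (Fin t → Q) × (Fin t → Q) → ℝ) : Continuous (fun p => w (plab t p)) :=
  (continuous_of_discreteTopology (f := w)).comp (continuous_plab t)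

/-- cell averages -/
def wavg (ν : Measure (X × X)) (t : ℕ) (g : X × X → ℝ) (b : (Fin t → Q) × (Fin t → Q)) : ℝ :=
  (∫ p in plab t ⁻¹' {b}, g p ∂ν) / ν.real (plab t ⁻¹' {b})

def filt : Filtration ℕ (inferInstance : MeasurableSpace (X × X)) where
  seq t := MeasurableSpace.comap (plab t) ⊤
  mono' := by
    intro s t hst
    let r : (Fin t → Q) → (Fin s → Q) := fun l i => l (Fin.castLE hst i)
    have : plab s = (Prod.map r r) ∘ plab t := by
      funext p; rfl
    show MeasurableSpace.comap (plab s) ⊤ ≤ MeasurableSpace.comap (plab t) ⊤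
    rw [this, ← MeasurableSpace.comap_comp]
    exact MeasurableSpace.comap_mono le_top
  le' t := by
    rintro s ⟨B, _, rfl⟩
    exact measurable_plab t (Set.toFinite B).measurableSet

lemma filt_iSup : (⨆ t, filt t) = (inferInstance : MeasurableSpace (X × X)) := by
  apply le_antisymm (iSup_le (fun t => filt.le t))
  have h1 : ∀ i : ℕ, Measurable[⨆ t, filt t] (fun p : X × X => p.1 i) := by
    intro i
    have : Measurable[filt (i+1)] (fun p : X × X => p.1 i) := by
      intro B _
      exact ⟨{b | b.1 ⟨i, by omega⟩ ∈ B}, trivial, rfl⟩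
    exact this.mono (le_iSup (fun t => filt t) (i+1)) le_rfl
  have h2 : ∀ i : ℕ, Measurable[⨆ t, filt t] (fun p : X × X => p.2 i) := by
    intro i
    have : Measurable[filt (i+1)] (fun p : X × X => p.2 i) := by
      intro B _
      exact ⟨{b | b.2 ⟨i, by omega⟩ ∈ B}, trivial, rfl⟩
    exact this.mono (le_iSup (fun t => filt t) (i+1)) le_rfl
  have h3 : Measurable[⨆ t, filt t] (fun p : X × X => p) := by
    have a1 : Measurable[⨆ t, filt t] (fun p : X × X => p.1) :=
      @measurable_pi_lambda _ _ _ (⨆ t, filt t) _ _ h1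
    have a2 : Measurable[⨆ t, filt t] (fun p : X × X => p.2) :=
      @measurable_pi_lambda _ _ _ (⨆ t, filt t) _ _ h2
    exact Measurable.prodMk a1 a2
  intro s hs
  exact h3 hs

lemma wavg_condExp (ν : Measure (X × X)) [IsProbabilityMeasure ν] (t : ℕ) (g : X × X → ℝ)
    (hg : Integrable g ν) :
    (fun p => wavg ν t g (plab t p)) =ᵐ[ν] ν[g | filt t] := by
  have hIntg : Integrable (fun p => wavg ν t g (plab t p)) ν :=
    (BoundedContinuousFunction.mkOfCompact ⟨_, continuous_comp_plab t (wavg ν t g)⟩).integrable ν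
  refine ae_eq_condExp_of_forall_setIntegral_eq (filt.le t) hg (fun _ _ _ => hIntg.integrableOn) ?_ ?_
  · rintro s ⟨B, _, rfl⟩ _
    have hB : plab t ⁻¹' B = ⋃ b ∈ (Set.toFinite B).toFinset, plab t ⁻¹' {b} := by
      ext p; simp
    have hdisj : Set.Pairwise (↑(Set.toFinite B).toFinset) (Function.onFun Disjoint fun b => plab t ⁻¹' {b}) := by
      intro b _ b' _ hbb
      exact Disjoint.preimage _ (by simpa using hbb)
    have hm : ∀ b, MeasurableSet (plab t ⁻¹' {b}) := fun b => measurable_plab t (measurableSet_singleton b)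
    rw [hB, integral_biUnion_finset _ (fun b _ => hm b) hdisj (fun b _ => hIntg.integrableOn),
      integral_biUnion_finset _ (fun b _ => hm b) hdisj (fun b _ => hg.integrableOn)]
    apply Finset.sum_congr rfl
    intro b _
    have : ∫ p in plab t ⁻¹' {b}, wavg ν t g (plab t p) ∂ν = ∫ p in plab t ⁻¹' {b}, wavg ν t g b ∂ν := by
      apply setIntegral_congr_fun (hm b)
      intro p hp
      have hp' : plab t p = b := hp
      simp only [hp']
    rw [this, setIntegral_const, smul_eq_mul, wavg]
    by_cases h0 : ν.real (plab t ⁻¹' {b}) = 0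
    · rw [h0, zero_mul]
      have : ν (plab t ⁻¹' {b}) = 0 := by
        simpa [Measure.real, ENNReal.toReal_eq_zero_iff] using h0
      rw [setIntegral_measure_zero _ this]
    · field_simp
  · refine StronglyMeasurable.aestronglyMeasurable ?_
    apply Measurable.stronglyMeasurable
    intro B _
    exact ⟨{b | wavg ν t g b ∈ B}, trivial, rfl⟩

lemma l1_conv (ν : Measure (X × X)) [IsProbabilityMeasure ν] (g : X × X → ℝ)
    (hg : Integrable g ν) (hgm : Measurable g) :
    Tendsto (fun t => ∫ p, |wavg ν t g (plab t p) - g p| ∂ν) atTop (𝓝 0) := by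
  have h := tendsto_eLpNorm_condExp (μ := ν) (ℱ := filt) g
  have htop : ν[g | ⨆ n, filt n] = g := by
    rw [filt_iSup]
    exact condExp_of_stronglyMeasurable le_rfl hgm.stronglyMeasurable hg
  rw [htop] at h
  have h2 := (ENNReal.tendsto_toReal ENNReal.zero_ne_top).comp h
  simp only [ENNReal.toReal_zero] at h2
  refine h2.congr (fun t => ?_)
  simp only [Function.comp]
  have hi : Integrable (ν[g | filt t] - g) ν := integrable_condExp.sub hg
  rw [eLpNorm_one_eq_lintegral_enorm, ← integral_norm_eq_lintegral_enorm hi.aestronglyMeasurable]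
  apply integral_congr_ae
  filter_upwards [wavg_condExp ν t g hg] with p hp
  rw [hp]; rfl

lemma wavg_mem01 (ν : Measure (X × X)) [IsProbabilityMeasure ν] (t : ℕ) (g : X × X → ℝ)
    (hg : ∀ p, 0 ≤ g p ∧ g p ≤ 1) (b) : 0 ≤ wavg ν t g b ∧ wavg ν t g b ≤ 1 := by
  unfold wavg
  constructor
  · exact div_nonneg (integral_nonneg (fun p => (hg p).1)) measureReal_nonneg
  · apply div_le_one_of_le₀ _ measureReal_nonneg
    calc ∫ p in plab t ⁻¹' {b}, g p ∂ν ≤ ∫ p in plab t ⁻¹' {b}, (1:ℝ) ∂ν := by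
          apply integral_mono_of_nonneg (ae_of_all _ (fun p => (hg p).1)) (integrable_const _)
            (ae_of_all _ (fun p => (hg p).2))
      _ = _ := by simp

end
end IRL

namespace IRL
open Finset MeasureTheory Filter Topology
lemma pi_marg {ι κ' : Type*} [Fintype ι] [Fintype κ'] (κ : ι → Measure X) [∀ i, IsProbabilityMeasure (κ i)]
    (v : κ' → ι) (hv : Function.Injective v) :
    (Measure.pi κ).map (fun x a => x (v a)) = Measure.pi (fun a => κ (v a)) := by
  have h := ProbabilityTheory.iIndepFun_pi (μ := κ) (X := fun _ (x : X) => x) (fun i => aemeasurable_id)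
  have h2 := h.precomp hv
  have h3 := (ProbabilityTheory.iIndepFun_iff_map_fun_eq_pi_map (fun i => (measurable_pi_apply _).aemeasurable)).1 h2
  rw [h3]
  congr; ext1 a
  exact (measurePreserving_eval κ (v a)).map_eq

lemma pi_marg2 {ι : Type*} [Fintype ι] (κ : ι → Measure X) [∀ i, IsProbabilityMeasure (κ i)]
    {a b : ι} (hab : a ≠ b) :
    (Measure.pi κ).map (fun x => (x a, x b)) = (κ a).prod (κ b) := by
  have h := ProbabilityTheory.iIndepFun_pi (μ := κ) (X := fun _ (x : X) => x) (fun i => aemeasurable_id)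
  have h2 := h.indepFun hab
  have h3 := (ProbabilityTheory.indepFun_iff_map_prod_eq_prod_map_map (measurable_pi_apply _).aemeasurable (measurable_pi_apply _).aemeasurable).1 h2
  rw [h3]
  congr
  · exact (measurePreserving_eval κ a).map_eq
  · exact (measurePreserving_eval κ b).map_eq

noncomputable section

variable (N : ℕ → ℕ) (c : ∀ m, Fin (N m) → Fin (N m) → Fin 3) (φ : ∀ m, Fin (N m) → X)

/-- colour indicator -/
def ci (m : ℕ) (h : Fin 3) (p : Fin (N m) × Fin (N m)) : ℝ := if c m p.1 p.2 = h then 1 else 0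

lemma ci01 (m : ℕ) (h : Fin 3) (p : Fin (N m) × Fin (N m)) : 0 ≤ ci N c m h p ∧ ci N c m h p ≤ 1 := by
  unfold ci; split_ifs <;> norm_num

lemma setInt_eq (ν : Measure (X × X)) (t : ℕ) (g : X × X → ℝ) (b) :
    ∫ p, (if plab t p = b then (1:ℝ) else 0) * g p ∂ν = ∫ p in plab t ⁻¹' {b}, g p ∂ν := by
  rw [← integral_indicator (measurable_plab t (measurableSet_singleton b))]
  congr 1; ext p
  by_cases hp : plab t p = b <;> simp [Set.indicator, hp]

lemma setInt_eq1 (ν : Measure (X × X)) (t : ℕ) (b) :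
    ∫ p, (if plab t p = b then (1:ℝ) else 0) ∂ν = ν.real (plab t ⁻¹' {b}) := by
  have := setInt_eq ν t (fun _ => 1) b
  simpa using this

lemma wavg_mul (ν : Measure (X × X)) [IsProbabilityMeasure ν] (t : ℕ) (g : X × X → ℝ) (b) :
    wavg ν t g b * ν.real (plab t ⁻¹' {b}) = ∫ p in plab t ⁻¹' {b}, g p ∂ν := by
  unfold wavg
  by_cases h0 : ν.real (plab t ⁻¹' {b}) = 0
  · rw [h0, mul_zero, setIntegral_measure_zero]
    exact (measureReal_eq_zero_iff).1 h0
  · field_simp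

variable {N c φ}
variable {𝒰 : Ultrafilter ℕ} {μ : Measure X} [IsProbabilityMeasure μ] {W : Fin 3 → X × X → ℝ}

lemma avg_close (hN : ∀ m, 0 < N m)
    (hlimC : ∀ h (F : X×X→ℝ), Continuous F → Tendsto (fun m => (∑ p : Fin (N m) × Fin (N m), if c m p.1 p.2 = h then F (φ m p.1, φ m p.2) else 0) / (N m:ℝ)^2) 𝒰 (𝓝 (∫ p, F p * W h p ∂(μ.prod μ))))
    (hlimP : ∀ F : X×X→ℝ, Continuous F → Tendsto (fun m => (∑ p : Fin (N m) × Fin (N m), F (φ m p.1, φ m p.2)) / (N m:ℝ)^2) 𝒰 (𝓝 (∫ p, F p ∂(μ.prod μ))))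
    (t : ℕ) (h : Fin 3) :
    Tendsto (fun m => (∑ p : Fin (N m) × Fin (N m), |avg (fun p : Fin (N m) × Fin (N m) => plab t (φ m p.1, φ m p.2)) (ci N c m h) p - wavg (μ.prod μ) t (W h) (plab t (φ m p.1, φ m p.2))|) / (N m:ℝ)^2) 𝒰 (𝓝 0) := by
  have key : Tendsto (fun m => ∑ b, |(∑ p : Fin (N m) × Fin (N m), if c m p.1 p.2 = h then (if plab t (φ m p.1, φ m p.2) = b then (1:ℝ) else 0) else 0) / (N m:ℝ)^2 - wavg (μ.prod μ) t (W h) b * ((∑ p : Fin (N m) × Fin (N m), if plab t (φ m p.1, φ m p.2) = b then (1:ℝ) else 0) / (N m:ℝ)^2)|) 𝒰 (𝓝 (∑ b, |(∫ p, (if plab t p = b then (1:ℝ) else 0) * W h p ∂(μ.prod μ)) - wavg (μ.prod μ) t (W h) b * (∫ p, (if plab t p = b then (1:ℝ) else 0) ∂(μ.prod μ))|)) := by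
    refine tendsto_finsetSum _ fun b _ => ?_
    have hc := continuous_comp_plab t (fun b' => if b' = b then (1:ℝ) else 0)
    exact ((hlimC h _ hc).sub ((hlimP _ hc).const_mul _)).abs
  have z : (∑ b, |(∫ p, (if plab t p = b then (1:ℝ) else 0) * W h p ∂(μ.prod μ)) - wavg (μ.prod μ) t (W h) b * (∫ p, (if plab t p = b then (1:ℝ) else 0) ∂(μ.prod μ))|) = 0 := by
    refine Finset.sum_eq_zero fun b _ => ?_
    rw [setInt_eq, setInt_eq1, wavg_mul]; simp
  rw [z] at key
  refine key.congr fun m => ?_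
  rw [avg_l1 (fun p : Fin (N m) × Fin (N m) => plab t (φ m p.1, φ m p.2)) (ci N c m h) (wavg (μ.prod μ) t (W h)), Finset.sum_div]
  refine Finset.sum_congr rfl fun b _ => ?_
  have hp : (0:ℝ) < (N m:ℝ)^2 := by have := hN m; positivity
  rw [← abs_of_pos hp, ← abs_div, abs_of_pos hp]
  congr 1
  rw [sub_div, mul_div_assoc]
  congr 2
  · refine Finset.sum_congr rfl fun p _ => ?_
    unfold ci
    split_ifs <;> rfl
  · congr 1
    refine Finset.sum_congr rfl fun p _ => ?_
    split_ifs <;> rfl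

lemma dens_zero (hN : ∀ m, 0 < N m) (hWm : ∀ h, Measurable (W h)) (hW : ∀ h p, 0 ≤ W h p ∧ W h p ≤ 1)
    (hlimV : ∀ k (F : (Fin k → X) → ℝ), Continuous F → Tendsto (fun m => (∑ v : Fin k → Fin (N m), F (fun a => φ m (v a))) / (N m:ℝ)^k) 𝒰 (𝓝 (∫ x, F x ∂(Measure.pi fun _ => μ))))
    (hlimC : ∀ h (F : X×X→ℝ), Continuous F → Tendsto (fun m => (∑ p : Fin (N m) × Fin (N m), if c m p.1 p.2 = h then F (φ m p.1, φ m p.2) else 0) / (N m:ℝ)^2) 𝒰 (𝓝 (∫ p, F p * W h p ∂(μ.prod μ))))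
    (hlimP : ∀ F : X×X→ℝ, Continuous F → Tendsto (fun m => (∑ p : Fin (N m) × Fin (N m), F (φ m p.1, φ m p.2)) / (N m:ℝ)^2) 𝒰 (𝓝 (∫ p, F p ∂(μ.prod μ))))
    (hreg : ∀ m (s r : ℕ), 0 < r → ∃ t, t < r ∧ ∀ (h : Fin 3) (a b : Fin (N m) → ℝ), (∀ v, 0 ≤ a v ∧ a v ≤ 1) → (∀ v, 0 ≤ b v ∧ b v ≤ 1) → |∑ u, ∑ v, (ci N c m h (u,v) - avg (fun p : Fin (N m) × Fin (N m) => plab (s+t) (φ m p.1, φ m p.2)) (ci N c m h) (u,v)) * (a u * b v)| ≤ Real.sqrt (3/r) * (Fintype.card (Fin (N m)):ℝ)^2)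
    (k : ℕ) (h : Fin k × Fin k → Fin 3)
    (hz : Tendsto (fun m => (∑ v : Fin k → Fin (N m), ∏ q ∈ pairs k, ci N c m (h q) (v q.1, v q.2)) / (N m:ℝ)^k) 𝒰 (𝓝 0)) :
    ∫ x, ∏ q ∈ pairs k, W (h q) (x q.1, x q.2) ∂(Measure.pi fun _ : Fin k => μ) = 0 := by
  set P := Measure.pi fun _ : Fin k => μ with hP
  have hnn : 0 ≤ ∫ x, ∏ q ∈ pairs k, W (h q) (x q.1, x q.2) ∂P :=
    integral_nonneg fun x => (prod_mem01 _ _ (fun q _ => hW (h q) (x q.1, x q.2))).1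
  refine le_antisymm ?_ hnn
  suffices H : ∀ η : ℝ, 0 < η → ∫ x, ∏ q ∈ pairs k, W (h q) (x q.1, x q.2) ∂P ≤ 3 * (pairs k).card * η by
    refine le_of_forall_pos_le_add fun e he => ?_
    refine (H (e / (3 * (pairs k).card + 1)) (by positivity)).trans ?_
    rw [zero_add, mul_div_assoc', div_le_iff₀ (by positivity)]
    nlinarith
  intro η hη
  -- choose s
  have hIntg : ∀ h, Integrable (W h) (μ.prod μ) := fun h =>
    Integrable.of_bound (hWm h).aestronglyMeasurable 1 (ae_of_all _ fun p => by
      rw [Real.norm_eq_abs, abs_of_nonneg (hW h p).1]; exact (hW h p).2)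
  obtain ⟨s, hs⟩ : ∃ s, ∀ t ≥ s, ∀ h, ∫ p, |wavg (μ.prod μ) t (W h) (plab t p) - W h p| ∂(μ.prod μ) < η := by
    have : ∀ᶠ t in atTop, ∀ h, ∫ p, |wavg (μ.prod μ) t (W h) (plab t p) - W h p| ∂(μ.prod μ) < η := by
      rw [eventually_all]
      intro h
      exact (l1_conv (μ.prod μ) (W h) (hIntg h) (hWm h)).eventually (gt_mem_nhds hη)
    simpa [eventually_atTop] using this
  obtain ⟨r, hr0, hr⟩ : ∃ r : ℕ, 0 < r ∧ Real.sqrt (3/r) ≤ η := by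
    obtain ⟨r, hr⟩ := exists_nat_gt (3 / η^2)
    have hr0 : (0:ℝ) < r := lt_trans (by positivity) hr
    refine ⟨r, by exact_mod_cast hr0, ?_⟩
    apply Real.sqrt_le_iff.2 ⟨hη.le, ?_⟩
    rw [div_lt_iff₀ (by positivity)] at hr
    rw [div_le_iff₀ hr0]; linarith
  have h1 : ∀ᶠ m in 𝒰, ∃ t ∈ Set.Iio r, ∀ (h : Fin 3) (a b : Fin (N m) → ℝ), (∀ v, 0 ≤ a v ∧ a v ≤ 1) → (∀ v, 0 ≤ b v ∧ b v ≤ 1) → |∑ u, ∑ v, (ci N c m h (u,v) - avg (fun p : Fin (N m) × Fin (N m) => plab (s+t) (φ m p.1, φ m p.2)) (ci N c m h) (u,v)) * (a u * b v)| ≤ Real.sqrt (3/r) * (Fintype.card (Fin (N m)):ℝ)^2 :=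
    Eventually.of_forall fun m => hreg m s r hr0
  rw [Ultrafilter.eventually_exists_mem_iff (Set.finite_Iio r)] at h1
  obtain ⟨t', -, h1⟩ := h1
  set t := s + t' with ht
  set w : Fin 3 → _ → ℝ := fun h => wavg (μ.prod μ) t (W h) with hw
  have hw01 : ∀ h b, 0 ≤ w h b ∧ w h b ≤ 1 := fun h b => wavg_mem01 _ _ _ (hW h) b
  have h2 : ∀ᶠ m in 𝒰, ∀ h, (∑ p : Fin (N m) × Fin (N m), |avg (fun p : Fin (N m) × Fin (N m) => plab t (φ m p.1, φ m p.2)) (ci N c m h) p - w h (plab t (φ m p.1, φ m p.2))|) / (N m:ℝ)^2 < η := by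
    rw [eventually_all]
    intro h
    exact (avg_close hN hlimC hlimP t h).eventually (gt_mem_nhds hη)
  have h3 : ∀ᶠ m in 𝒰, (∑ v : Fin k → Fin (N m), ∏ q ∈ pairs k, w (h q) (plab t (φ m (v q.1), φ m (v q.2)))) / (N m:ℝ)^k ≤ (∑ v : Fin k → Fin (N m), ∏ q ∈ pairs k, ci N c m (h q) (v q.1, v q.2)) / (N m:ℝ)^k + (pairs k).card * (2 * η) := by
    filter_upwards [h1, h2] with m h1 h2
    have : Nonempty (Fin (N m)) := ⟨⟨0, hN m⟩⟩
    have hp : (0:ℝ) < (N m:ℝ) := by exact_mod_cast hN m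
    have hc := counting (V := Fin (N m)) (fun q u v => ci N c m (h q) (u, v)) (fun q u v => w (h q) (plab t (φ m u, φ m v))) (2 * η) (fun q u v => ci01 N c m _ _) (fun q u v => hw01 _ _) (by
      intro q a b ha hb
      have e1 := h1 (h q) a b ha hb
      have e2 := h2 (h q)
      rw [div_lt_iff₀ (by positivity), Fintype.sum_prod_type] at e2
      have e3 : |∑ u, ∑ v, (avg (fun p : Fin (N m) × Fin (N m) => plab t (φ m p.1, φ m p.2)) (ci N c m (h q)) (u, v) - w (h q) (plab t (φ m u, φ m v))) * (a u * b v)| ≤ η * (N m : ℝ)^2 := by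
        refine le_trans ?_ e2.le
        refine (Finset.abs_sum_le_sum_abs _ _).trans (Finset.sum_le_sum fun u _ => ?_)
        refine (Finset.abs_sum_le_sum_abs _ _).trans (Finset.sum_le_sum fun v _ => ?_)
        rw [abs_mul]
        refine mul_le_of_le_one_right (abs_nonneg _) ?_
        rw [abs_of_nonneg (mul_nonneg (ha u).1 (hb v).1)]
        exact mul_le_one₀ (ha u).2 (hb v).1 (hb v).2
      have e4 : ∑ u, ∑ v, (ci N c m (h q) (u, v) - w (h q) (plab t (φ m u, φ m v))) * (a u * b v) = ∑ u, ∑ v, (ci N c m (h q) (u,v) - avg (fun p : Fin (N m) × Fin (N m) => plab t (φ m p.1, φ m p.2)) (ci N c m (h q)) (u,v)) * (a u * b v) + ∑ u, ∑ v, (avg (fun p : Fin (N m) × Fin (N m) => plab t (φ m p.1, φ m p.2)) (ci N c m (h q)) (u, v) - w (h q) (plab t (φ m u, φ m v))) * (a u * b v) := by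
        rw [← Finset.sum_add_distrib]
        refine Finset.sum_congr rfl fun u _ => ?_
        rw [← Finset.sum_add_distrib]
        refine Finset.sum_congr rfl fun v _ => ?_
        ring
      rw [e4]
      refine (abs_add_le _ _).trans ?_
      rw [Fintype.card_fin] at e1 ⊢
      have : √(3 / (r:ℝ)) * (N m:ℝ)^2 ≤ η * (N m:ℝ)^2 := by gcongr
      linarith)
    rw [Fintype.card_fin] at hc
    have hc' := (abs_le.1 hc).1
    have hpk : (0:ℝ) < (N m:ℝ)^k := by positivity
    rw [div_add' _ _ _ hpk.ne']
    gcongr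
    linarith
  have hcont : Continuous fun x : Fin k → X => ∏ q ∈ pairs k, w (h q) (plab t (x q.1, x q.2)) := by
    refine continuous_finsetProd _ fun q _ => ?_
    exact (continuous_comp_plab t (w (h q))).comp ((continuous_apply q.1).prodMk (continuous_apply q.2))
  have h4 : ∫ x, ∏ q ∈ pairs k, w (h q) (plab t (x q.1, x q.2)) ∂P ≤ 0 + (pairs k).card * (2 * η) :=
    le_of_tendsto_of_tendsto (hlimV k _ hcont) (hz.add_const _) h3
  -- compare W and w
  have hmp : ∀ q ∈ pairs k, MeasurePreserving (fun x : Fin k → X => (x q.1, x q.2)) P (μ.prod μ) := by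
    intro q hq
    refine ⟨by fun_prop, pi_marg2 (fun _ : Fin k => μ) ?_⟩
    have : q.1 < q.2 := by simpa [pairs] using hq
    exact this.ne
  have hwm : ∀ h, Measurable fun p => w h (plab t p) := fun h => (continuous_comp_plab t (w h)).measurable
  have hmW : Measurable fun x : Fin k → X => ∏ q ∈ pairs k, W (h q) (x q.1, x q.2) := by
    refine Finset.measurable_prod _ fun q _ => (hWm _).comp (by fun_prop)
  have hdi : ∀ h, Integrable (fun p => |w h (plab t p) - W h p|) (μ.prod μ) := fun h =>
    Integrable.of_bound ((hwm h).sub (hWm h)).abs.aestronglyMeasurable 1 (ae_of_all _ fun p => by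
      have := hW h p
      have := hw01 h (plab t p)
      rw [Real.norm_eq_abs, abs_abs, abs_le]; constructor <;> linarith)
  have hiq : ∀ q ∈ pairs k, Integrable (fun x : Fin k → X => |w (h q) (plab t (x q.1, x q.2)) - W (h q) (x q.1, x q.2)|) P := fun q hq =>
    ((hmp q hq).integrable_comp (hdi (h q)).aestronglyMeasurable).2 (hdi (h q))
  have hi1 : Integrable (fun x : Fin k → X => ∏ q ∈ pairs k, W (h q) (x q.1, x q.2)) P :=
    Integrable.of_bound hmW.aestronglyMeasurable 1 (ae_of_all _ fun x => by
      have := prod_mem01 (pairs k) _ (fun q _ => hW (h q) (x q.1, x q.2))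
      rw [Real.norm_eq_abs, abs_of_nonneg this.1]; exact this.2)
  have hi2 : Integrable (fun x : Fin k → X => ∏ q ∈ pairs k, w (h q) (plab t (x q.1, x q.2))) P :=
    Integrable.of_bound hcont.measurable.aestronglyMeasurable 1 (ae_of_all _ fun x => by
      have := prod_mem01 (pairs k) _ (fun q _ => hw01 (h q) (plab t (x q.1, x q.2)))
      rw [Real.norm_eq_abs, abs_of_nonneg this.1]; exact this.2)
  have h5 : ∫ x, ∏ q ∈ pairs k, W (h q) (x q.1, x q.2) ∂P ≤ ∫ x, (∏ q ∈ pairs k, w (h q) (plab t (x q.1, x q.2)) + ∑ q ∈ pairs k, |w (h q) (plab t (x q.1, x q.2)) - W (h q) (x q.1, x q.2)|) ∂P := by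
    refine integral_mono hi1 (hi2.add (integrable_finsetSum _ hiq)) fun x => ?_
    have := (abs_le.1 (prod_sub_le (pairs k) _ _ (fun q => hw01 (h q) (plab t (x q.1, x q.2))) (fun q => hW (h q) (x q.1, x q.2)))).1
    simp only
    linarith
  rw [integral_add hi2 (integrable_finsetSum _ hiq), integral_finsetSum _ hiq] at h5
  have h6 : ∑ q ∈ pairs k, ∫ x, |w (h q) (plab t (x q.1, x q.2)) - W (h q) (x q.1, x q.2)| ∂P ≤ ∑ q ∈ pairs k, η := by
    refine Finset.sum_le_sum fun q hq => ?_
    have e := integral_map (hmp q hq).measurable.aemeasurable (f := fun p => |w (h q) (plab t p) - W (h q) p|) (by rw [(hmp q hq).map_eq]; exact (hdi (h q)).aestronglyMeasurable)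
    rw [(hmp q hq).map_eq] at e
    rw [← e]
    exact (hs t (by omega) (h q)).le
  rw [Finset.sum_const, nsmul_eq_mul] at h6
  linarith
end
end IRL

namespace IRL
open Finset MeasureTheory Filter Topology

noncomputable section

lemma pi_cond_ac {ι : Type*} [Fintype ι] (μ : Measure X) [IsProbabilityMeasure μ] (s : ι → Set X)
    (hs : ∀ i, MeasurableSet (s i)) (h0 : ∀ i, μ (s i) ≠ 0) :
    Measure.pi (fun i => ProbabilityTheory.cond μ (s i)) ≪ Measure.pi (fun _ : ι => μ) := by
  have : ∀ i, IsProbabilityMeasure (ProbabilityTheory.cond μ (s i)) := fun i =>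
    ProbabilityTheory.cond_isProbabilityMeasure (h0 i)
  have e : Measure.pi (fun i => ProbabilityTheory.cond μ (s i)) =
      ProbabilityTheory.cond (Measure.pi (fun _ : ι => μ)) (Set.univ.pi s) := by
    refine Measure.pi_eq fun u hu => ?_
    rw [ProbabilityTheory.cond_apply (MeasurableSet.univ_pi hs), ← Set.pi_inter_distrib,
      Measure.pi_pi, Measure.pi_pi]
    simp_rw [ProbabilityTheory.cond_apply (hs _)]
    rw [Finset.prod_mul_distrib, ENNReal.prod_inv_distrib]
    intro i _ j _ _
    left; exact h0 i
  rw [e]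
  exact ProbabilityTheory.cond_absolutelyContinuous

variable (μ : Measure X)

def cellS (t : ℕ) (l : Fin t → Q) : Set X := if μ (lab t ⁻¹' {l}) = 0 then Set.univ else lab t ⁻¹' {l}

def kap (t : ℕ) (l : Fin t → Q) : Measure X := ProbabilityTheory.cond μ (cellS μ t l)

lemma cellS_meas (t : ℕ) (l : Fin t → Q) : MeasurableSet (cellS μ t l) := by
  unfold cellS; split_ifs
  · exact MeasurableSet.univ
  · exact measurable_lab t (measurableSet_singleton l)

variable [IsProbabilityMeasure μ]

lemma cellS_ne (t : ℕ) (l : Fin t → Q) : μ (cellS μ t l) ≠ 0 := by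
  unfold cellS; split_ifs with h
  · simp
  · exact h

instance kap_prob (t : ℕ) (l : Fin t → Q) : IsProbabilityMeasure (kap μ t l) :=
  ProbabilityTheory.cond_isProbabilityMeasure (cellS_ne μ t l)

/-- conditional probability of a set in a cell -/
def zz (t : ℕ) (Z : Set (X × X)) (b : (Fin t → Q) × (Fin t → Q)) : ℝ :=
  ((kap μ t b.1).prod (kap μ t b.2)).real Z

lemma zz_eq (t : ℕ) (Z : Set (X × X)) (hZ : MeasurableSet Z) (b : (Fin t → Q) × (Fin t → Q))
    (hb : (μ.prod μ) (plab t ⁻¹' {b}) ≠ 0) :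
    zz μ t Z b = wavg (μ.prod μ) t (Z.indicator 1) b := by
  have hpre : plab t ⁻¹' {b} = (lab t ⁻¹' {b.1}) ×ˢ (lab t ⁻¹' {b.2}) := by
    ext p; simp [plab, Prod.ext_iff]
  have hm := measurable_plab t (measurableSet_singleton b)
  rw [hpre, Measure.prod_prod, mul_ne_zero_iff] at hb
  unfold zz wavg kap cellS
  rw [if_neg hb.1, if_neg hb.2, integral_indicator_one hZ, hpre]
  unfold ProbabilityTheory.cond
  rw [Measure.prod_smul_left, Measure.prod_smul_right, Measure.prod_restrict]
  simp only [measureReal_def, Measure.smul_apply, Measure.prod_prod, smul_eq_mul, ENNReal.toReal_mul, ENNReal.toReal_inv]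
  field_simp

lemma edit_static {W : Fin 3 → X × X → ℝ} (hWm : ∀ h, Measurable (W h)) (hW : ∀ h p, 0 ≤ W h p ∧ W h p ≤ 1)
    (hpos : ∀ᵐ p ∂(μ.prod μ), ∃ h, 0 < W h p) {n : ℕ} (c : Fin n → Fin n → Fin 3) (t : ℕ) (lb : Fin n → Fin t → Q) :
    ∃ c' : Fin n → Fin n → Fin 3,
      ((univ.filter fun p : Fin n × Fin n => p.1 < p.2 ∧ c' p.1 p.2 ≠ c p.1 p.2).card : ℝ) ≤
        ∑ p : Fin n × Fin n, zz μ t {q | W (c p.1 p.2) q = 0} (lb p.1, lb p.2) ∧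
      ∀ k (h : Fin k × Fin k → Fin 3),
        ∫ x, ∏ q ∈ pairs k, W (h q) (x q.1, x q.2) ∂(Measure.pi fun _ : Fin k => μ) = 0 →
        ∀ v : Fin k → Fin n, StrictMono v → ∃ q ∈ pairs k, c' (v q.1) (v q.2) ≠ h q := by
  set P := Measure.pi (fun v : Fin n => kap μ t (lb v)) with hP
  have hZ : ∀ h, MeasurableSet {q | W h q = 0} := fun h => hWm h (measurableSet_singleton 0)
  have hac : ∀ l, kap μ t l ≪ μ := fun l => ProbabilityTheory.cond_absolutelyContinuous
  have hmp : ∀ u v : Fin n, u ≠ v → MeasurePreserving (fun x : Fin n → X => (x u, x v)) P ((kap μ t (lb u)).prod (kap μ t (lb v))) := by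
    intro u v huv
    exact ⟨by fun_prop, pi_marg2 (fun v : Fin n => kap μ t (lb v)) huv⟩
  have a1 : ∀ᵐ x ∂P, ∀ u v, u ≠ v → ∃ h, 0 < W h (x u, x v) := by
    rw [ae_all_iff]; intro u
    rw [ae_all_iff]; intro v
    by_cases huv : u = v
    · simp [huv]
    have := (hmp u v huv).quasiMeasurePreserving.ae (((hac (lb u)).prod (hac (lb v))).ae_le hpos)
    filter_upwards [this] with x hx _ using hx
  have a2 : ∀ᵐ x ∂P, ∀ (kh : Σ k, Fin k × Fin k → Fin 3) (v : Fin kh.1 → Fin n), 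
      ∫ x, ∏ q ∈ pairs kh.1, W (kh.2 q) (x q.1, x q.2) ∂(Measure.pi fun _ : Fin kh.1 => μ) = 0 →
      StrictMono v → ∏ q ∈ pairs kh.1, W (kh.2 q) (x (v q.1), x (v q.2)) = 0 := by
    rw [ae_all_iff]; rintro ⟨k, h⟩
    rw [ae_all_iff]; intro v
    by_cases hc : ∫ x, ∏ q ∈ pairs k, W (h q) (x q.1, x q.2) ∂(Measure.pi fun _ : Fin k => μ) = 0 ∧ StrictMono v
    swap
    · refine ae_of_all _ fun x h1 h2 => absurd ⟨h1, h2⟩ hc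
    obtain ⟨h1, h2⟩ := hc
    have hmW : Measurable fun x : Fin k → X => ∏ q ∈ pairs k, W (h q) (x q.1, x q.2) := by
      refine Finset.measurable_prod _ fun q _ => (hWm _).comp (by fun_prop)
    have h01 : ∀ x : Fin k → X, _ := fun x => prod_mem01 (pairs k) _ (fun q _ => hW (h q) (x q.1, x q.2))
    have hi1 : Integrable (fun x : Fin k → X => ∏ q ∈ pairs k, W (h q) (x q.1, x q.2)) (Measure.pi fun _ : Fin k => μ) :=
      Integrable.of_bound hmW.aestronglyMeasurable 1 (ae_of_all _ fun x => by
        rw [Real.norm_eq_abs, abs_of_nonneg (h01 x).1]; exact (h01 x).2)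
    have h3 := (integral_eq_zero_iff_of_nonneg (fun x => (h01 x).1) hi1).1 h1
    have hq : MeasurePreserving (fun (x : Fin n → X) (a : Fin k) => x (v a)) P (Measure.pi fun a => kap μ t (lb (v a))) :=
      ⟨by fun_prop, pi_marg (fun v : Fin n => kap μ t (lb v)) v h2.injective⟩
    have hpc : Measure.pi (fun a => kap μ t (lb (v a))) ≪ Measure.pi (fun _ : Fin k => μ) :=
      pi_cond_ac μ (fun a => cellS μ t (lb (v a))) (fun a => cellS_meas μ t _) (fun a => cellS_ne μ t _)
    filter_upwards [hq.quasiMeasurePreserving.ae (hpc.ae_le h3)] with x hx _ _ using hx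
  -- expected number of edits
  set f : (Fin n → X) → ℝ := fun x => ∑ p ∈ univ.filter (fun p : Fin n × Fin n => p.1 < p.2),
    ({q | W (c p.1 p.2) q = 0} : Set (X × X)).indicator 1 (x p.1, x p.2) with hf
  have hne : ∀ p ∈ univ.filter (fun p : Fin n × Fin n => p.1 < p.2), p.1 ≠ p.2 := fun p hp => by
    have : p.1 < p.2 := by simpa using hp
    exact this.ne
  have hint0 : ∀ (ν : Measure (X × X)) [IsProbabilityMeasure ν] h, Integrable (({q | W h q = 0} : Set (X × X)).indicator (1 : X × X → ℝ)) ν := 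
    fun ν _ h => (integrable_const (1:ℝ)).indicator (hZ h)
  have hfi : ∀ p ∈ univ.filter (fun p : Fin n × Fin n => p.1 < p.2), Integrable (fun x : Fin n → X => ({q | W (c p.1 p.2) q = 0} : Set (X × X)).indicator (1 : X × X → ℝ) (x p.1, x p.2)) P := fun p hp =>
    ((hmp _ _ (hne p hp)).integrable_comp (hint0 _ _).aestronglyMeasurable).2 (hint0 _ _)
  have hfint : Integrable f P := integrable_finsetSum _ hfi
  have hfE : ∫ x, f x ∂P ≤ ∑ p : Fin n × Fin n, zz μ t {q | W (c p.1 p.2) q = 0} (lb p.1, lb p.2) := by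
    rw [hf, integral_finsetSum _ hfi]
    refine le_trans (Finset.sum_le_sum (g := fun p : Fin n × Fin n => zz μ t {q | W (c p.1 p.2) q = 0} (lb p.1, lb p.2)) fun p hp => le_of_eq ?_) (Finset.sum_le_sum_of_subset_of_nonneg (Finset.filter_subset _ _) fun p _ _ => measureReal_nonneg)
    have hq := hmp _ _ (hne p hp)
    have e := integral_map hq.measurable.aemeasurable (f := ({q | W (c p.1 p.2) q = 0} : Set (X × X)).indicator (1 : X × X → ℝ)) (by rw [hq.map_eq]; exact (hint0 _ _).aestronglyMeasurable)
    rw [hq.map_eq] at e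
    rw [← e, integral_indicator_one (hZ _)]
    rfl
  obtain ⟨x, hx, hxf⟩ := exists_notMem_null_le_integral hfint (ae_iff.1 (a1.and a2))
  have hx' := not_not.1 hx
  obtain ⟨b1, b2⟩ := hx'
  choose! g hg using b1
  refine ⟨fun u v => if 0 < W (c u v) (x u, x v) then c u v else g u v, ?_, ?_⟩
  · refine le_trans ?_ (hxf.trans hfE)
    rw [hf, ← Finset.filter_filter, Finset.card_filter]
    push_cast
    refine Finset.sum_le_sum fun p _ => ?_
    by_cases hp : 0 < W (c p.1 p.2) (x p.1, x p.2)
    · simp only [hp, if_true, ne_eq, not_true_eq_false, if_false]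
      exact Set.indicator_nonneg (fun _ _ => zero_le_one) _
    · have : W (c p.1 p.2) (x p.1, x p.2) = 0 := le_antisymm (not_lt.1 hp) (hW _ _).1
      rw [Set.indicator_of_mem (by simpa using this)]
      split_ifs <;> simp
  · intro k h hk v hv
    by_contra hcon
    push Not at hcon
    have := b2 ⟨k, h⟩ v hk hv
    refine absurd this (ne_of_gt (Finset.prod_pos fun q hq => ?_))
    have hlt : q.1 < q.2 := by simpa [pairs] using hq
    have hvq := hv hlt
    simp only
    rw [← hcon q hq]
    split_ifs with h4
    · exact h4
    · exact hg _ _ hvq.ne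

variable {μ}
variable {N : ℕ → ℕ} {c : ∀ m, Fin (N m) → Fin (N m) → Fin 3} {φ : ∀ m, Fin (N m) → X}
variable {𝒰 : Ultrafilter ℕ} {W : Fin 3 → X × X → ℝ}

lemma ae_cell (ν : Measure (X × X)) (t : ℕ) : ∀ᵐ p ∂ν, ν (plab t ⁻¹' {plab t p}) ≠ 0 := by
  have : ∀ᵐ p ∂ν, ∀ b, plab t p = b → ν (plab t ⁻¹' {b}) ≠ 0 := by
    rw [ae_all_iff]; intro b
    by_cases hb : ν (plab t ⁻¹' {b}) = 0
    · have : ∀ᵐ p ∂ν, p ∉ plab t ⁻¹' {b} := measure_eq_zero_iff_ae_notMem.1 hb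
      filter_upwards [this] with p hp h
      exact absurd h hp
    · exact ae_of_all _ fun p _ => hb
  filter_upwards [this] with p hp using hp _ rfl

lemma editing (hN : ∀ m, 0 < N m) (hWm : ∀ h, Measurable (W h)) (hW : ∀ h p, 0 ≤ W h p ∧ W h p ≤ 1)
    (hlimC : ∀ h (F : X×X→ℝ), Continuous F → Tendsto (fun m => (∑ p : Fin (N m) × Fin (N m), if c m p.1 p.2 = h then F (φ m p.1, φ m p.2) else 0) / (N m:ℝ)^2) 𝒰 (𝓝 (∫ p, F p * W h p ∂(μ.prod μ))))
    (hpos : ∀ᵐ p ∂(μ.prod μ), ∃ h, 0 < W h p) {ε : ℝ} (hε : 0 < ε) :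
    ∀ᶠ m in 𝒰, ∃ c' : Fin (N m) → Fin (N m) → Fin 3,
      ((univ.filter fun p : Fin (N m) × Fin (N m) => p.1 < p.2 ∧ c' p.1 p.2 ≠ c m p.1 p.2).card : ℝ) ≤ ε * (N m:ℝ)^2 ∧
      ∀ k (h : Fin k × Fin k → Fin 3),
        ∫ x, ∏ q ∈ pairs k, W (h q) (x q.1, x q.2) ∂(Measure.pi fun _ : Fin k => μ) = 0 →
        ∀ v : Fin k → Fin (N m), StrictMono v → ∃ q ∈ pairs k, c' (v q.1) (v q.2) ≠ h q := by
  have hZ : ∀ h, MeasurableSet {q | W h q = 0} := fun h => hWm h (measurableSet_singleton 0)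
  have hI : ∀ h, Integrable (({q | W h q = 0} : Set (X × X)).indicator (1 : X × X → ℝ)) (μ.prod μ) := 
    fun h => (integrable_const (1:ℝ)).indicator (hZ h)
  have hIm : ∀ h, Measurable (({q | W h q = 0} : Set (X × X)).indicator (1 : X × X → ℝ)) := fun h => measurable_one.indicator (hZ h)
  obtain ⟨t, ht⟩ : ∃ t, ∀ h, ∫ p, |wavg (μ.prod μ) t (({q | W h q = 0} : Set (X × X)).indicator 1) (plab t p) - ({q | W h q = 0} : Set (X × X)).indicator 1 p| ∂(μ.prod μ) < ε / 3 := by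
    have : ∀ᶠ t in atTop, ∀ h, ∫ p, |wavg (μ.prod μ) t (({q | W h q = 0} : Set (X × X)).indicator 1) (plab t p) - ({q | W h q = 0} : Set (X × X)).indicator 1 p| ∂(μ.prod μ) < ε / 3 := by
      rw [eventually_all]
      intro h
      exact (l1_conv (μ.prod μ) _ (hI h) (hIm h)).eventually (gt_mem_nhds (by positivity))
    exact this.exists
  have hlt : ∀ h, ∫ p, zz μ t {q | W h q = 0} (plab t p) * W h p ∂(μ.prod μ) < ε / 3 := by
    intro h
    refine lt_of_le_of_lt ?_ (ht h)
    have hb : ∀ b, 0 ≤ zz μ t {q | W h q = 0} b ∧ zz μ t {q | W h q = 0} b ≤ 1 := fun b =>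
      ⟨measureReal_nonneg, measureReal_le_one⟩
    have hi01 : ∀ p, 0 ≤ ({q | W h q = 0} : Set (X × X)).indicator (1 : X × X → ℝ) p ∧ ({q | W h q = 0} : Set (X × X)).indicator (1 : X × X → ℝ) p ≤ 1 := by
      intro p; by_cases hp : p ∈ {q | W h q = 0} <;> simp [Set.indicator, hp]
    refine integral_mono_ae ?_ ?_ ?_
    · refine Integrable.of_bound ((continuous_comp_plab t _).measurable.mul (hWm h)).aestronglyMeasurable 1 (ae_of_all _ fun p => ?_)
      have h1 := hb (plab t p)
      have h2 := hW h p
      rw [Real.norm_eq_abs, abs_of_nonneg (mul_nonneg h1.1 h2.1)]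
      exact mul_le_one₀ h1.2 h2.1 h2.2
    · refine Integrable.of_bound ((continuous_comp_plab t _).measurable.sub (hIm h)).abs.aestronglyMeasurable 1 (ae_of_all _ fun p => ?_)
      have h1 := wavg_mem01 (μ.prod μ) t _ hi01 (plab t p)
      have h2 := hi01 p
      rw [Real.norm_eq_abs, abs_abs, abs_le]; constructor <;> linarith
    · filter_upwards [ae_cell (μ.prod μ) t] with p hp
      rw [zz_eq μ t _ (hZ h) _ hp]
      have h1 := wavg_mem01 (μ.prod μ) t _ hi01 (plab t p)
      have h2 := hW h p
      by_cases hz : W h p = 0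
      · rw [hz, mul_zero]; exact abs_nonneg _
      · rw [Set.indicator_of_notMem (by simpa using hz), sub_zero, abs_of_nonneg h1.1]
        exact mul_le_of_le_one_right h1.1 h2.2
  have hev : ∀ᶠ m in 𝒰, ∀ h, (∑ p : Fin (N m) × Fin (N m), if c m p.1 p.2 = h then zz μ t {q | W h q = 0} (plab t (φ m p.1, φ m p.2)) else 0) / (N m:ℝ)^2 < ε / 3 := by
    rw [eventually_all]
    intro h
    exact (hlimC h _ (continuous_comp_plab t (zz μ t {q | W h q = 0}))).eventually (gt_mem_nhds (hlt h))
  filter_upwards [hev] with m hm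
  obtain ⟨c', h1, h2⟩ := edit_static μ hWm hW hpos (c m) t (fun v => lab t (φ m v))
  refine ⟨c', h1.trans ?_, h2⟩
  have hp : (0:ℝ) < (N m:ℝ)^2 := by have := hN m; positivity
  have e : ∑ p : Fin (N m) × Fin (N m), zz μ t {q | W (c m p.1 p.2) q = 0} (lab t (φ m p.1), lab t (φ m p.2)) = ∑ h, ∑ p : Fin (N m) × Fin (N m), if c m p.1 p.2 = h then zz μ t {q | W h q = 0} (plab t (φ m p.1, φ m p.2)) else 0 := by
    rw [Finset.sum_comm]
    refine Finset.sum_congr rfl fun p _ => ?_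
    rw [Finset.sum_ite_eq]
    simp [plab]
  rw [e]
  calc _ ≤ ∑ h : Fin 3, ε / 3 * (N m:ℝ)^2 := Finset.sum_le_sum fun h _ => by
        have := hm h
        rw [div_lt_iff₀ hp] at this
        exact this.le
    _ = _ := by simp; ring
end
end IRL

namespace IRL
open Finset MeasureTheory Filter Topology

noncomputable section

/-- the colour of an ordered pair -/
def col {V : Type*} (A : V → V → Prop) (u v : V) : Fin 3 := if A u v then 1 else if A v u then 2 else 0

lemma col_eq {V U : Type*} {A : V → V → Prop} {H : U → U → Prop} (hA : IsOriented A) (hH : IsOriented H)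
    {u v a b} (h : col A u v = col H a b) : (A u v ↔ H a b) ∧ (A v u ↔ H b a) := by
  have h1 := hA u v
  have h2 := hH a b
  unfold col at h
  by_cases c1 : A u v <;> by_cases c2 : A v u <;> by_cases c3 : H a b <;> by_cases c4 : H b a <;>
    simp_all

lemma sum_diag {n k : ℕ} (hn : 0 < n) {a b : Fin k} (hab : a ≠ b) :
    ∑ v : Fin k → Fin n, (if v a = v b then (1:ℝ) else 0) = (n:ℝ)^k / n := by
  have := sum_update (V := Fin n) a (fun v => if v a = v b then (1:ℝ) else 0)
  have hn' : (n:ℝ) ≠ 0 := by positivity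
  rw [eq_div_iff hn', mul_comm]
  simp [Function.update_of_ne hab.symm] at this
  rw [Finset.sum_boole]
  exact this.symm

lemma card_match {n k : ℕ} {A : Fin n → Fin n → Prop} {H : Fin k → Fin k → Prop} (hA : IsOriented A) (hH : IsOriented H)
    (σ : Equiv.Perm (Fin k)) :
    (univ.filter fun v : Fin k → Fin n => Function.Injective v ∧ ∀ q ∈ pairs k, col A (v q.1) (v q.2) = col (fun a b => H (σ a) (σ b)) q.1 q.2).card ≤ k^k * numCopies H A := by
  unfold numCopies
  refine Finset.card_le_mul_card_image_of_maps_to (f := fun v => univ.image v) ?_ _ ?_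
  · intro v hv
    simp only [mem_filter, mem_univ, true_and] at hv ⊢
    obtain ⟨hi, hm⟩ := hv
    have hH' : IsOriented (fun a b => H (σ a) (σ b)) := fun a b => hH _ _
    have hm' : ∀ a b, A (v a) (v b) ↔ H (σ a) (σ b) := by
      intro a b
      rcases lt_trichotomy a b with h | h | h
      · exact (col_eq hA hH' (hm (a, b) (by simpa [pairs] using h))).1
      · subst h
        exact ⟨fun h => absurd h (hA _ _ h), fun h => absurd h (hH _ _ h)⟩
      · exact (col_eq hA hH' (hm (b, a) (by simpa [pairs] using h))).2
    refine ⟨v ∘ σ.symm, hi.comp σ.symm.injective, ?_, ?_⟩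
    · intro u
      simp only [mem_image, mem_univ, true_and, Function.comp]
      exact ⟨fun ⟨a, ha⟩ => ⟨σ a, by simpa using ha⟩, fun ⟨a, ha⟩ => ⟨_, ha⟩⟩
    · intro a b
      simp [hm']
  · intro S hS
    simp only [mem_filter, mem_univ, true_and] at hS
    obtain ⟨f, hf, hfS, -⟩ := hS
    have hc : S.card = k := by
      have : S = univ.image f := by ext u; simp [hfS]
      rw [this, card_image_of_injective _ hf]; simp
    calc _ ≤ (Fintype.piFinset (fun _ : Fin k => S)).card := by
          refine card_le_card fun v hv => ?_
          simp only [mem_filter, mem_univ, true_and] at hv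
          rw [Fintype.mem_piFinset]
          intro a
          rw [← hv.2]
          exact mem_image_of_mem _ (mem_univ a)
      _ = k^k := by simp [hc]

lemma match_le {n k : ℕ} (hn : 0 < n) {A : Fin n → Fin n → Prop} {H : Fin k → Fin k → Prop} (hA : IsOriented A) (hH : IsOriented H)
    (σ : Equiv.Perm (Fin k)) :
    ∑ v : Fin k → Fin n, ∏ q ∈ pairs k, (if col A (v q.1) (v q.2) = col (fun a b => H (σ a) (σ b)) q.1 q.2 then (1:ℝ) else 0) ≤
      (pairs k).card * ((n:ℝ)^k / n) + (k:ℝ)^k * numCopies H A := by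
  have key : ∀ v : Fin k → Fin n, ∏ q ∈ pairs k, (if col A (v q.1) (v q.2) = col (fun a b => H (σ a) (σ b)) q.1 q.2 then (1:ℝ) else 0) ≤
      ∑ q ∈ pairs k, (if v q.1 = v q.2 then (1:ℝ) else 0) + if (Function.Injective v ∧ ∀ q ∈ pairs k, col A (v q.1) (v q.2) = col (fun a b => H (σ a) (σ b)) q.1 q.2) then (1:ℝ) else 0 := by
    intro v
    have hnn : 0 ≤ ∑ q ∈ pairs k, (if v q.1 = v q.2 then (1:ℝ) else 0) := Finset.sum_nonneg fun q _ => by split_ifs <;> norm_num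
    by_cases hm : ∀ q ∈ pairs k, col A (v q.1) (v q.2) = col (fun a b => H (σ a) (σ b)) q.1 q.2
    · rw [Finset.prod_congr rfl (fun q hq => if_pos (hm q hq)), Finset.prod_const_one]
      by_cases hi : Function.Injective v
      · rw [if_pos ⟨hi, hm⟩]; linarith
      · rw [if_neg (fun h => hi h.1), add_zero]
        obtain ⟨q, hq, hv⟩ : ∃ q ∈ pairs k, v q.1 = v q.2 := by
          simp only [Function.Injective, not_forall] at hi
          obtain ⟨a, b, h, hab⟩ := hi
          rcases lt_or_gt_of_ne hab with h' | h'
          · exact ⟨(a, b), by simpa [pairs] using h', h⟩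
          · exact ⟨(b, a), by simpa [pairs] using h', h.symm⟩
        have := Finset.single_le_sum (f := fun q => if v q.1 = v q.2 then (1:ℝ) else 0) (fun q _ => by split_ifs <;> norm_num) hq
        simpa [hv] using this
    · rw [if_neg (fun h => hm h.2), add_zero]
      push Not at hm
      obtain ⟨q, hq, hne⟩ := hm
      rw [Finset.prod_eq_zero hq (if_neg hne)]
      exact hnn
  refine (Finset.sum_le_sum fun v _ => key v).trans ?_
  rw [Finset.sum_add_distrib, Finset.sum_comm]
  refine add_le_add (le_of_eq ?_) ?_
  · rw [Finset.sum_congr rfl (g := fun _ => (n:ℝ)^k / n), Finset.sum_const, nsmul_eq_mul]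
    intro q hq
    have : q.1 < q.2 := by simpa [pairs] using hq
    exact sum_diag hn this.ne
  · rw [Finset.sum_boole]
    exact_mod_cast card_match hA hH σ

theorem main {ι : Type*} (k : ι → ℕ)
    (H : ∀ i : ι, Fin (k i) → Fin (k i) → Prop) (hH : ∀ i, IsOriented (H i)) :
    ∀ εR : ℝ, 0 < εR → ∃ (n₀ : ℕ) (δ : ℝ), 0 < δ ∧
      ∀ n : ℕ, n₀ ≤ n → ∀ A : Fin n → Fin n → Prop, IsOriented A →
        (∀ i : ι, (numCopies (H i) A : ℝ) ≤ δ * (n : ℝ) ^ (k i)) →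
        ∃ B : Fin n → Fin n → Prop, IsOriented B ∧ (∀ i : ι, numCopies (H i) B = 0) ∧
          (pairDiff A B : ℝ) ≤ εR * (n : ℝ) ^ 2 := by
  intro ε hε
  by_contra hcon
  have hbad : ∀ m : ℕ, ∃ n : ℕ, m + 1 ≤ n ∧ ∃ A : Fin n → Fin n → Prop, IsOriented A ∧
      (∀ i : ι, (numCopies (H i) A : ℝ) ≤ (1 / ((m:ℝ) + 1)) * (n : ℝ) ^ (k i)) ∧
      ¬ ∃ B : Fin n → Fin n → Prop, IsOriented B ∧ (∀ i : ι, numCopies (H i) B = 0) ∧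
          (pairDiff A B : ℝ) ≤ ε * (n : ℝ) ^ 2 := by
    intro m
    by_contra h
    refine hcon ⟨m + 1, 1 / ((m:ℝ) + 1), by positivity, fun n hn A hA hc => ?_⟩
    by_contra h'
    exact h ⟨n, hn, A, hA, hc, h'⟩
  choose N hN A hA hcop hno using hbad
  have hN0 : ∀ m, 0 < N m := fun m => by have := hN m; omega
  set 𝒰 : Ultrafilter ℕ := hyperfilter ℕ
  have hU : (𝒰 : Filter ℕ) ≤ atTop := Nat.hyperfilter_le_atTop
  set c : ∀ m, Fin (N m) → Fin (N m) → Fin 3 := fun m => col (A m) with hc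
  have hreg := fun m => weakreg (V := Fin (N m)) (ci N c m) (ci01 N c m)
  choose φ hφ using hreg
  obtain ⟨μ, hμ, W, hWm, hW, hlimV, hlimC, hlimP, hpos⟩ := limit_exists 𝒰 N hN0 c φ
  have hev := editing hN0 hWm hW hlimC hpos hε
  obtain ⟨m, c', hcount, hfree⟩ := hev.exists
  -- vanishing densities
  have hzero : ∀ i (σ : Equiv.Perm (Fin (k i))),
      ∫ x, ∏ q ∈ pairs (k i), W (col (fun a b => H i (σ a) (σ b)) q.1 q.2) (x q.1, x q.2) ∂(Measure.pi fun _ : Fin (k i) => μ) = 0 := by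
    intro i σ
    refine dens_zero hN0 hWm hW hlimV hlimC hlimP hφ (k i) (fun q => col (fun a b => H i (σ a) (σ b)) q.1 q.2) ?_
    have hlim : Tendsto (fun m : ℕ => ((pairs (k i)).card : ℝ) * (1 / ((m:ℝ) + 1)) + (k i : ℝ)^(k i) * (1 / ((m:ℝ) + 1))) 𝒰 (𝓝 0) := by
      have h0 := (tendsto_one_div_add_atTop_nhds_zero_nat (𝕜 := ℝ)).mono_left hU
      simpa using (h0.const_mul ((pairs (k i)).card : ℝ)).add (h0.const_mul ((k i : ℝ)^(k i)))
    refine squeeze_zero (fun m => ?_) (fun m => ?_) hlim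
    · refine div_nonneg (Finset.sum_nonneg fun v _ => Finset.prod_nonneg fun q _ => (ci01 N c m _ _).1) (by positivity)
    · have hp : (0:ℝ) < N m := by exact_mod_cast hN0 m
      have hp' : (0:ℝ) < (N m:ℝ)^(k i) := by positivity
      rw [div_le_iff₀ hp']
      refine (match_le (hN0 m) (hA m) (hH i) σ).trans ?_
      rw [add_mul]
      refine add_le_add ?_ ?_
      · rw [mul_assoc]
        gcongr
        rw [div_eq_inv_mul, ← one_div]
        gcongr
        exact_mod_cast hN m
      · rw [mul_assoc]
        gcongr
        exact hcop m i
  -- the modified graph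
  refine hno m ⟨fun u v => (u < v ∧ c' u v = 1) ∨ (v < u ∧ c' v u = 2), ?_, ?_, ?_⟩
  · intro u v h1 h2
    rcases h1 with ⟨h, e⟩ | ⟨h, e⟩ <;> rcases h2 with ⟨h', e'⟩ | ⟨h', e'⟩
    · exact lt_asymm h h'
    · rw [e] at e'; exact absurd e' (by decide)
    · rw [e] at e'; exact absurd e' (by decide)
    · exact lt_asymm h h'
  · intro i
    unfold numCopies
    rw [Finset.card_eq_zero, Finset.filter_eq_empty_iff]
    rintro S - ⟨f, hf, -, hfH⟩
    set σ := Tuple.sort f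
    have hmono : StrictMono (f ∘ σ) := (Tuple.monotone_sort f).strictMono_of_injective (hf.comp σ.injective)
    obtain ⟨q, hq, hne⟩ := hfree (k i) _ (hzero i σ) (f ∘ σ) hmono
    apply hne
    have hlt : q.1 < q.2 := by simpa [pairs] using hq
    have hlt' := hmono hlt
    have e1 := hfH (σ q.1) (σ q.2)
    have e2 := hfH (σ q.2) (σ q.1)
    simp only [Function.comp] at hlt' ⊢
    simp only [hlt', hlt'.not_gt, true_and, false_and, or_false, false_or] at e1 e2
    unfold col
    simp only [← e1, ← e2]
    generalize c' (f (σ q.1)) (f (σ q.2)) = x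
    fin_cases x <;> simp
  · refine le_trans ?_ hcount
    unfold pairDiff
    norm_cast
    refine card_le_card fun p hp => ?_
    simp only [mem_filter, mem_univ, true_and] at hp ⊢
    obtain ⟨hlt, hd⟩ := hp
    refine ⟨hlt, fun he => hd ?_⟩
    simp only [hlt, hlt.not_gt, true_and, false_and, or_false, false_or]
    rw [he, hc]
    have h1 := hA m p.1 p.2
    clear * - h1
    unfold col
    by_cases c1 : A m p.1 p.2 <;> by_cases c2 : A m p.2 p.1 <;> simp [c1, c2]
    exact h1 c1 c2
end
end IRL

/-- **infinite induced oriented graph removal lemma.** Let `F` be a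
(possibly infinite) family of oriented graphs `H i` on `k i` vertices. For every
`ε_R > 0` there are `n₀` and `δ > 0` such that every oriented graph on `n ≥ n₀`
vertices containing at most `δ n^{k i}` induced copies of each `H i` can be made
induced `H i`-free for all `i` by changing at most `ε_R n²` pairs of vertices. -/
theorem induced_removal_lemma {ι : Type*} (k : ι → ℕ)
    (H : ∀ i : ι, Fin (k i) → Fin (k i) → Prop) (hH : ∀ i, IsOriented (H i)) :
    ∀ εR : ℝ, 0 < εR → ∃ (n₀ : ℕ) (δ : ℝ), 0 < δ ∧
      ∀ n : ℕ, n₀ ≤ n → ∀ A : Fin n → Fin n → Prop, IsOriented A →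
        (∀ i : ι, (numCopies (H i) A : ℝ) ≤ δ * (n : ℝ) ^ (k i)) →
        ∃ B : Fin n → Fin n → Prop, IsOriented B ∧ (∀ i : ι, numCopies (H i) B = 0) ∧
          (pairDiff A B : ℝ) ≤ εR * (n : ℝ) ^ 2 := by
  exact IRL.main k H hH
end

section
/- The inducibility of the directed path on five vertices in the family T⃗ of T⃗₃-free oriented graphs equals 5!/6⁴ = 5/54; that is, I(P⃗₅, T⃗) = 5!/6⁴. -/
open scoped Classical

namespace P5T3

/-- `u` and `v` are non-adjacent. -/
def Non {V : Type*} (A : V → V → Prop) (u v : V) : Prop := ¬ A u v ∧ ¬ A v u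

/-- The number of elements satisfying a predicate, as a real number. -/
noncomputable def cnt {V : Type*} [Fintype V] (p : V → Prop) : ℝ :=
  ∑ w, if p w then (1 : ℝ) else 0

section
variable {V : Type*} (A : V → V → Prop)

/-- right extensions of a path on one vertex -/
def r1 (x w : V) : Prop := A x w
/-- right extensions of a path on two vertices -/
def r2 (x y w : V) : Prop := Non A x w ∧ A y w
/-- right extensions of a path on three vertices -/
def r3 (x y z w : V) : Prop := Non A x w ∧ Non A y w ∧ A z w
/-- right extensions of a path on four vertices -/
def r4 (x y z u w : V) : Prop := Non A x w ∧ Non A y w ∧ Non A z w ∧ A u w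
/-- left extensions of a path on one vertex -/
def l1 (x w : V) : Prop := A w x
/-- left extensions of a path on two vertices -/
def l2 (x y w : V) : Prop := A w x ∧ Non A y w
/-- left extensions of a path on three vertices -/
def l3 (x y z w : V) : Prop := A w x ∧ Non A y w ∧ Non A z w
/-- left extensions of a path on four vertices -/
def l4 (x y z u w : V) : Prop := A w x ∧ Non A y w ∧ Non A z w ∧ Non A u w

/-- induced path on three vertices -/
def Q3 (x y z : V) : Prop := A x y ∧ r2 A x y z
/-- induced path on four vertices -/
def Q4 (x y z u : V) : Prop := Q3 A x y z ∧ r3 A x y z u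
/-- induced path on five vertices -/
def Q5 (x y z u v : V) : Prop := Q4 A x y z u ∧ r4 A x y z u v

lemma Q3_iff (x y z : V) : Q3 A x y z ↔ A y z ∧ l2 A y z x := by
  unfold Q3 r2 l2 Non; tauto

lemma Q4_iff_left (x y z u : V) : Q4 A x y z u ↔ Q3 A y z u ∧ l3 A y z u x := by
  unfold Q4 Q3 r3 r2 l3 Non; tauto

lemma Q5_iff_left (x y z u v : V) : Q5 A x y z u v ↔ Q4 A y z u v ∧ l4 A y z u v x := by
  unfold Q5 Q4 Q3 r4 r3 r2 l4 Non; tauto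

end

section
variable {V : Type*} [Fintype V]

lemma rot3 (f : V → V → V → ℝ) :
    ∑ y, ∑ z, ∑ x, f x y z = ∑ x, ∑ y, ∑ z, f x y z := by
  rw [Finset.sum_comm (f := fun x y => ∑ z, f x y z)]
  exact Finset.sum_congr rfl fun y _ => Finset.sum_comm

lemma rot4 (f : V → V → V → V → ℝ) :
    ∑ y, ∑ z, ∑ u, ∑ x, f x y z u = ∑ x, ∑ y, ∑ z, ∑ u, f x y z u := by
  rw [Finset.sum_comm (f := fun x y => ∑ z, ∑ u, f x y z u)]
  exact Finset.sum_congr rfl fun y _ => rot3 fun x z u => f x y z u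

lemma rot5 (f : V → V → V → V → V → ℝ) :
    ∑ y, ∑ z, ∑ u, ∑ v, ∑ x, f x y z u v = ∑ x, ∑ y, ∑ z, ∑ u, ∑ v, f x y z u v := by
  rw [Finset.sum_comm (f := fun x y => ∑ z, ∑ u, ∑ v, f x y z u v)]
  exact Finset.sum_congr rfl fun y _ => rot4 fun x z u v => f x y z u v

lemma rev4 (f : V → V → V → V → ℝ) :
    ∑ x, ∑ y, ∑ z, ∑ u, f x y z u = ∑ u, ∑ z, ∑ y, ∑ x, f x y z u := by
  rw [← rot4, ← rot3 (fun y z u => ∑ x, f x y z u)]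
  exact Finset.sum_comm

lemma cnt_nonneg (p : V → Prop) : 0 ≤ cnt p :=
  Finset.sum_nonneg fun w _ => by split_ifs <;> norm_num

lemma cnt_pos (p : V → Prop) (w : V) (hw : p w) : 0 < cnt p := by
  refine Finset.sum_pos' (fun w _ => by split_ifs <;> norm_num) ⟨w, Finset.mem_univ _, ?_⟩
  simp [hw]

lemma cnt_true : cnt (fun _ : V => True) = Fintype.card V := by simp [cnt]

/-- choosing a vertex uniformly among those satisfying `p` -/
lemma sum_step (p : V → Prop) (F : V → ℝ) (c : ℝ) (hc : 0 ≤ c)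
    (h1 : ∀ w, p w → F w ≤ c / cnt p) (h0 : ∀ w, ¬ p w → F w ≤ 0) :
    ∑ w, F w ≤ c := by
  have h : ∀ w, F w ≤ (if p w then (1 : ℝ) else 0) * (c / cnt p) := by
    intro w
    by_cases hw : p w
    · simpa [hw] using h1 w hw
    · simpa [hw] using h0 w hw
  calc ∑ w, F w ≤ ∑ w, (if p w then (1 : ℝ) else 0) * (c / cnt p) :=
        Finset.sum_le_sum fun w _ => h w
    _ = cnt p * (c / cnt p) := by rw [← Finset.sum_mul]; rfl
    _ ≤ c := by
        rcases (cnt_nonneg p).eq_or_lt with h | h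
        · rw [← h]; simpa using hc
        · rw [mul_div_cancel₀ _ h.ne']

variable (A : V → V → Prop)

/-- number of two-sided extensions of a three vertex path -/
noncomputable def t3 (x y z : V) : ℝ := cnt (r3 A x y z) + cnt (l3 A x y z)
/-- number of two-sided extensions of a four vertex path -/
noncomputable def t4 (x y z u : V) : ℝ := cnt (r4 A x y z u) + cnt (l4 A x y z u)

/-- extending a random three vertex path in a random direction -/
lemma two_step3 (M : V → V → V → ℝ) (hM : ∀ x y z, 0 ≤ M x y z) :
    ∑ x, ∑ y, ∑ z, ∑ u, (if Q4 A x y z u then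
        M x y z / t3 A x y z + M y z u / t3 A y z u else 0)
      ≤ ∑ x, ∑ y, ∑ z, if Q3 A x y z then M x y z else 0 := by
  have e1 : ∑ x, ∑ y, ∑ z, ∑ u, (if Q4 A x y z u then
        M x y z / t3 A x y z + M y z u / t3 A y z u else 0)
      = (∑ x, ∑ y, ∑ z, ∑ u, if Q4 A x y z u then M x y z / t3 A x y z else 0)
      + ∑ y, ∑ z, ∑ u, ∑ x, if Q4 A x y z u then M y z u / t3 A y z u else 0 := by
    have : ∑ y, ∑ z, ∑ u, ∑ x, (if Q4 A x y z u then M y z u / t3 A y z u else 0)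
      = ∑ x, ∑ y, ∑ z, ∑ u, if Q4 A x y z u then M y z u / t3 A y z u else 0 := by
      exact rot4 fun x y z u => if Q4 A x y z u then M y z u / t3 A y z u else 0
    rw [this]
    simp only [← Finset.sum_add_distrib]
    refine Finset.sum_congr rfl fun x _ => Finset.sum_congr rfl fun y _ =>
      Finset.sum_congr rfl fun z _ => Finset.sum_congr rfl fun u _ => ?_
    split_ifs <;> simp
  rw [e1]
  simp only [← Finset.sum_add_distrib]
  refine Finset.sum_le_sum fun x _ => Finset.sum_le_sum fun y _ =>
    Finset.sum_le_sum fun z _ => ?_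
  have f1 : ∑ u, (if Q4 A x y z u then M x y z / t3 A x y z else 0)
      = if Q3 A x y z then cnt (r3 A x y z) * (M x y z / t3 A x y z) else 0 := by
    by_cases h : Q3 A x y z
    · simp only [Q4, h, true_and, if_true, cnt, Finset.sum_mul, ite_mul, one_mul, zero_mul]
    · simp [Q4, h]
  have f2 : ∑ u, (if Q4 A u x y z then M x y z / t3 A x y z else 0)
      = if Q3 A x y z then cnt (l3 A x y z) * (M x y z / t3 A x y z) else 0 := by
    simp only [Q4_iff_left]
    by_cases h : Q3 A x y z
    · simp only [h, true_and, if_true, cnt, Finset.sum_mul, ite_mul, one_mul, zero_mul]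
    · simp [h]
  rw [Finset.sum_add_distrib, f1, f2]
  split_ifs with h
  · rw [← add_mul]
    change t3 A x y z * _ ≤ _
    rw [mul_div_left_comm]
    exact mul_le_of_le_one_right (hM _ _ _) (div_self_le_one _)
  · simp

lemma two_step4 (M : V → V → V → V → ℝ) (hM : ∀ x y z u, 0 ≤ M x y z u) :
    ∑ x, ∑ y, ∑ z, ∑ u, ∑ v, (if Q5 A x y z u v then
        M x y z u / t4 A x y z u + M y z u v / t4 A y z u v else 0)
      ≤ ∑ x, ∑ y, ∑ z, ∑ u, if Q4 A x y z u then M x y z u else 0 := by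
  have e1 : ∑ x, ∑ y, ∑ z, ∑ u, ∑ v, (if Q5 A x y z u v then
        M x y z u / t4 A x y z u + M y z u v / t4 A y z u v else 0)
      = (∑ x, ∑ y, ∑ z, ∑ u, ∑ v, if Q5 A x y z u v then M x y z u / t4 A x y z u else 0)
      + ∑ y, ∑ z, ∑ u, ∑ v, ∑ x, if Q5 A x y z u v then M y z u v / t4 A y z u v else 0 := by
    have : ∑ y, ∑ z, ∑ u, ∑ v, ∑ x, (if Q5 A x y z u v then M y z u v / t4 A y z u v else 0)
      = ∑ x, ∑ y, ∑ z, ∑ u, ∑ v, if Q5 A x y z u v then M y z u v / t4 A y z u v else 0 := by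
      exact rot5 fun x y z u v => if Q5 A x y z u v then M y z u v / t4 A y z u v else 0
    rw [this]
    simp only [← Finset.sum_add_distrib]
    refine Finset.sum_congr rfl fun x _ => Finset.sum_congr rfl fun y _ =>
      Finset.sum_congr rfl fun z _ => Finset.sum_congr rfl fun u _ =>
      Finset.sum_congr rfl fun v _ => ?_
    split_ifs <;> simp
  rw [e1]
  simp only [← Finset.sum_add_distrib]
  refine Finset.sum_le_sum fun x _ => Finset.sum_le_sum fun y _ =>
    Finset.sum_le_sum fun z _ => Finset.sum_le_sum fun u _ => ?_
  have f1 : ∑ v, (if Q5 A x y z u v then M x y z u / t4 A x y z u else 0)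
      = if Q4 A x y z u then cnt (r4 A x y z u) * (M x y z u / t4 A x y z u) else 0 := by
    by_cases h : Q4 A x y z u
    · simp only [Q5, h, true_and, if_true, cnt, Finset.sum_mul, ite_mul, one_mul, zero_mul]
    · simp [Q5, h]
  have f2 : ∑ v, (if Q5 A v x y z u then M x y z u / t4 A x y z u else 0)
      = if Q4 A x y z u then cnt (l4 A x y z u) * (M x y z u / t4 A x y z u) else 0 := by
    simp only [Q5_iff_left]
    by_cases h : Q4 A x y z u
    · simp only [h, true_and, if_true, cnt, Finset.sum_mul, ite_mul, one_mul, zero_mul]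
    · simp [h]
  rw [Finset.sum_add_distrib, f1, f2]
  split_ifs with h
  · rw [← add_mul]
    change t4 A x y z u * _ ≤ _
    rw [mul_div_left_comm]
    exact mul_le_of_le_one_right (hM _ _ _ _) (div_self_le_one _)
  · simp

/-- path grown to the right -/
noncomputable def mR (x y z : V) : ℝ :=
  1 / Fintype.card V / cnt (r1 A x) / cnt (r2 A x y) / cnt (r3 A x y z)
/-- path grown to the left -/
noncomputable def mL (y z u : V) : ℝ :=
  1 / Fintype.card V / cnt (l1 A u) / cnt (l2 A z u) / cnt (l3 A y z u)
/-- three vertex path grown from the middle vertex, first right, then left -/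
noncomputable def mM (y z : V) : ℝ :=
  1 / Fintype.card V / cnt (r1 A y) / cnt (l2 A y z)

lemma mR_nonneg (x y z : V) : 0 ≤ mR A x y z := by
  have := cnt_nonneg (V := V)
  unfold mR; have h1 := this (r1 A x); have h2 := this (r2 A x y); have h3 := this (r3 A x y z)
  positivity
lemma mL_nonneg (x y z : V) : 0 ≤ mL A x y z := by
  have := cnt_nonneg (V := V)
  unfold mL; have h1 := this (l1 A z); have h2 := this (l2 A y z); have h3 := this (l3 A x y z)
  positivity
lemma mM_nonneg (y z : V) : 0 ≤ mM A y z := by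
  have := cnt_nonneg (V := V)
  unfold mM; have h1 := this (r1 A y); have h2 := this (l2 A y z)
  positivity

lemma sum_mR : ∑ x, ∑ y, ∑ z, ∑ u, (if Q4 A x y z u then mR A x y z else 0) ≤ 1 := by
  have cn := cnt_nonneg (V := V)
  refine sum_step (fun _ => True) _ 1 zero_le_one (fun x _ => ?_) (fun _ h => absurd trivial h)
  rw [cnt_true]
  refine sum_step (r1 A x) _ _ (by positivity) (fun y hy => ?_) (fun y hy => ?_)
  swap
  · have hy' : ¬ A x y := hy
    simp [Q4, Q3, hy']
  have p1 := cn (r1 A x)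
  refine sum_step (r2 A x y) _ _ (by positivity) (fun z hz => ?_) (fun z hz => ?_)
  swap
  · simp [Q4, Q3, hz]
  have p2 := cn (r2 A x y)
  refine sum_step (r3 A x y z) _ _ (by positivity) (fun u hu => ?_) (fun u hu => ?_)
  swap
  · simp [Q4, hu]
  have : Q4 A x y z u := ⟨⟨hy, hz⟩, hu⟩
  rw [if_pos this]; rfl

lemma sum_mL : ∑ x, ∑ y, ∑ z, ∑ u, (if Q4 A x y z u then mL A y z u else 0) ≤ 1 := by
  have cn := cnt_nonneg (V := V)
  have e : ∑ x, ∑ y, ∑ z, ∑ u, (if Q4 A x y z u then mL A y z u else 0)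
    = ∑ u, ∑ z, ∑ y, ∑ x, (if Q4 A x y z u then mL A y z u else 0) := by
    exact rev4 fun x y z u => if Q4 A x y z u then mL A y z u else 0
  rw [e]
  refine sum_step (fun _ => True) _ 1 zero_le_one (fun u _ => ?_) (fun _ h => absurd trivial h)
  rw [cnt_true]
  refine sum_step (l1 A u) _ _ (by positivity) (fun z hz => ?_) (fun z hz => ?_)
  swap
  · have hy' : ¬ A z u := hz
    simp [Q4_iff_left, Q3_iff, hy']
  have p1 := cn (l1 A u)
  refine sum_step (l2 A z u) _ _ (by positivity) (fun y hy => ?_) (fun y hy => ?_)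
  swap
  · simp [Q4_iff_left, Q3_iff, hy]
  have p2 := cn (l2 A z u)
  refine sum_step (l3 A y z u) _ _ (by positivity) (fun x hx => ?_) (fun x hx => ?_)
  swap
  · simp [Q4_iff_left, hx]
  have : Q4 A x y z u := (Q4_iff_left A _ _ _ _).2 ⟨(Q3_iff A _ _ _).2 ⟨hz, hy⟩, hx⟩
  rw [if_pos this]; rfl

lemma sum_mM : ∑ x, ∑ y, ∑ z, (if Q3 A x y z then mM A y z else 0) ≤ 1 := by
  have cn := cnt_nonneg (V := V)
  have e : ∑ x, ∑ y, ∑ z, (if Q3 A x y z then mM A y z else 0)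
    = ∑ y, ∑ z, ∑ x, (if Q3 A x y z then mM A y z else 0) := by
    exact (rot3 fun x y z => if Q3 A x y z then mM A y z else 0).symm
  rw [e]
  refine sum_step (fun _ => True) _ 1 zero_le_one (fun y _ => ?_) (fun _ h => absurd trivial h)
  rw [cnt_true]
  refine sum_step (r1 A y) _ _ (by positivity) (fun z hz => ?_) (fun z hz => ?_)
  swap
  · have hy' : ¬ A y z := hz
    simp [Q3_iff, hy']
  have p1 := cn (r1 A y)
  refine sum_step (l2 A y z) _ _ (by positivity) (fun x hx => ?_) (fun x hx => ?_)
  swap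
  · simp [Q3_iff, hx]
  have : Q3 A x y z := (Q3_iff A _ _ _).2 ⟨hz, hx⟩
  rw [if_pos this]; rfl

/-- the distribution on four vertex paths -/
noncomputable def mu4 (x y z u : V) : ℝ :=
  1 / 6 * mR A x y z + 1 / 6 * mL A y z u
    + 2 / 3 * (mM A y z / t3 A x y z + mM A z u / t3 A y z u)

lemma t3_nonneg (x y z : V) : 0 ≤ t3 A x y z := add_nonneg (cnt_nonneg _) (cnt_nonneg _)

lemma mu4_nonneg (x y z u : V) : 0 ≤ mu4 A x y z u := by
  have h1 := mR_nonneg A x y z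
  have h2 := mL_nonneg A y z u
  have h3 := mM_nonneg A y z
  have h4 := mM_nonneg A z u
  have h5 := t3_nonneg A x y z
  have h6 := t3_nonneg A y z u
  unfold mu4; positivity

lemma sum_mu4 : ∑ x, ∑ y, ∑ z, ∑ u, (if Q4 A x y z u then mu4 A x y z u else 0) ≤ 1 := by
  have h1 := sum_mR A
  have h2 := sum_mL A
  have h3 := (two_step3 A (fun _ y z => mM A y z) (fun _ y z => mM_nonneg A y z)).trans (sum_mM A)
  have e : ∑ x, ∑ y, ∑ z, ∑ u, (if Q4 A x y z u then mu4 A x y z u else 0)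
     = 1 / 6 * (∑ x, ∑ y, ∑ z, ∑ u, (if Q4 A x y z u then mR A x y z else 0))
      + 1 / 6 * (∑ x, ∑ y, ∑ z, ∑ u, (if Q4 A x y z u then mL A y z u else 0))
      + 2 / 3 * ∑ x, ∑ y, ∑ z, ∑ u, (if Q4 A x y z u then
        mM A y z / t3 A x y z + mM A z u / t3 A y z u else 0) := by
    simp only [Finset.mul_sum, ← Finset.sum_add_distrib]
    refine Finset.sum_congr rfl fun x _ => Finset.sum_congr rfl fun y _ =>
      Finset.sum_congr rfl fun z _ => Finset.sum_congr rfl fun u _ => ?_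
    split_ifs <;> simp [mu4]
  rw [e]; linarith

lemma sum_mu5 : ∑ x, ∑ y, ∑ z, ∑ u, ∑ v, (if Q5 A x y z u v then
        mu4 A x y z u / t4 A x y z u + mu4 A y z u v / t4 A y z u v else 0) ≤ 1 :=
  (two_step4 A _ (mu4_nonneg A)).trans (sum_mu4 A)

end

lemma tangent (a b c d : ℝ) (ha : 0 < a) (hb : 0 < b) (hc : 0 < c) (hd : 0 < d) :
    5 - (a + b + c + d) ≤ 1 / (a * b * c * d) := by
  have h : ∀ y : ℝ, y ≤ Real.exp (y - 1) := fun y => by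
    have := Real.add_one_le_exp (y - 1); linarith
  have h1 : a * b * c * d ≤ Real.exp (a + b + c + d - 4) := by
    have e : Real.exp (a + b + c + d - 4)
        = Real.exp (a - 1) * Real.exp (b - 1) * Real.exp (c - 1) * Real.exp (d - 1) := by
      rw [← Real.exp_add, ← Real.exp_add, ← Real.exp_add]; congr 1; ring
    rw [e]
    have := h a; have := h b; have := h c; have := h d
    gcongr
  calc 5 - (a + b + c + d) ≤ Real.exp (-(a + b + c + d - 4)) := by
        have := Real.add_one_le_exp (-(a + b + c + d - 4)); linarith
    _ = 1 / Real.exp (a + b + c + d - 4) := by rw [Real.exp_neg, one_div]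
    _ ≤ 1 / (a * b * c * d) := one_div_le_one_div_of_le (by positivity) h1

lemma tangent1 (n a b c d : ℝ) (hn : 0 < n) (ha : 0 < a) (hb : 0 < b) (hc : 0 < c) (hd : 0 < d) :
    648 / n ^ 5 * (5 - (6 * a + 6 * b + 6 * c + 3 * d) / n) ≤ 1 / n / a / b / c / d := by
  have h := tangent (6 * a / n) (6 * b / n) (6 * c / n) (3 * d / n)
    (by positivity) (by positivity) (by positivity) (by positivity)
  have h2 := mul_le_mul_of_nonneg_left h (show (0 : ℝ) ≤ 648 / n ^ 5 by positivity)
  calc _ = 648 / n ^ 5 * (5 - (6 * a / n + 6 * b / n + 6 * c / n + 3 * d / n)) := by ring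
    _ ≤ _ := h2
    _ = _ := by field_simp; norm_num

lemma tangent2 (n a b c d : ℝ) (hn : 0 < n) (ha : 0 < a) (hb : 0 < b) (hc : 0 < c) (hd : 0 < d) :
    324 / n ^ 5 * (5 - (6 * a + 6 * b + 3 * c + 3 * d) / n) ≤ 1 / n / a / b / c / d := by
  have h := tangent (6 * a / n) (6 * b / n) (3 * c / n) (3 * d / n)
    (by positivity) (by positivity) (by positivity) (by positivity)
  have h2 := mul_le_mul_of_nonneg_left h (show (0 : ℝ) ≤ 324 / n ^ 5 by positivity)
  calc _ = 324 / n ^ 5 * (5 - (6 * a / n + 6 * b / n + 3 * c / n + 3 * d / n)) := by ring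
    _ ≤ _ := h2
    _ = _ := by field_simp; norm_num

/-- total price of all choice sets, for any way of measuring the choice sets -/
def price {V : Type*} (A : V → V → Prop) (C : (V → Prop) → ℝ) (a b c d e : V) : ℝ :=
  let s3 := fun x y z => C (r3 A x y z) + C (l3 A x y z)
  let s4 := fun x y z u => C (r4 A x y z u) + C (l4 A x y z u)
  (2 * C (r1 A a) + 2 * C (r2 A a b) + 2 * C (r3 A a b c) + s4 a b c d)
  + (2 * C (l1 A d) + 2 * C (l2 A c d) + 2 * C (l3 A b c d) + s4 a b c d)
  + 2 * (2 * C (r1 A b) + 2 * C (l2 A b c) + s3 a b c + s4 a b c d)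
  + 2 * (2 * C (r1 A c) + 2 * C (l2 A c d) + s3 b c d + s4 a b c d)
  + (2 * C (r1 A b) + 2 * C (r2 A b c) + 2 * C (r3 A b c d) + s4 b c d e)
  + (2 * C (l1 A e) + 2 * C (l2 A d e) + 2 * C (l3 A c d e) + s4 b c d e)
  + 2 * (2 * C (r1 A c) + 2 * C (l2 A c d) + s3 b c d + s4 b c d e)
  + 2 * (2 * C (r1 A d) + 2 * C (l2 A d e) + s3 c d e + s4 b c d e)

lemma price_point {V : Type*} (A : V → V → Prop) (hO : IsOriented A) (hT : T3Free A)
    (a b c d e w : V) (h : Q5 A a b c d e) :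
    price A (fun p => if p w then (1 : ℝ) else 0) a b c d e ≤ 16 := by
  obtain ⟨⟨⟨hab, -, hbc⟩, -, -, hcd⟩, -, -, -, hde⟩ := h
  have tri : ∀ x y, A x y → (¬ A x w ∧ ¬ A w x) ∨ (A x w ∧ ¬ A w x ∧ ¬ A y w ∧ ¬ A w y) ∨
      (¬ A x w ∧ A w x ∧ ¬ A w y) := by
    intro x y hxy
    have h1 := hO x w
    have h2 := hT x y w
    have h3 := hT x w y
    have h4 := hT w x y
    tauto
  have last : (¬ A e w ∧ ¬ A w e) ∨ (A e w ∧ ¬ A w e) ∨ (¬ A e w ∧ A w e) := by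
    have h1 := hO e w
    tauto
  rcases tri a b hab with ⟨h1, h2⟩ | ⟨h1, h2, h3, h4⟩ | ⟨h1, h2, h3⟩ <;>
  rcases tri b c hbc with ⟨h5, h6⟩ | ⟨h5, h6, h7, h8⟩ | ⟨h5, h6, h7⟩ <;>
  first
  | contradiction
  | (rcases tri c d hcd with ⟨h9, h10⟩ | ⟨h9, h10, h11, h12⟩ | ⟨h9, h10, h11⟩ <;>
    first
    | contradiction
    | (rcases tri d e hde with ⟨h13, h14⟩ | ⟨h13, h14, h15, h16⟩ | ⟨h13, h14, h15⟩ <;>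
      first
      | contradiction
      | (rcases last with ⟨h17, h18⟩ | ⟨h17, h18⟩ | ⟨h17, h18⟩ <;>
        first
        | contradiction
        | (simp only [price, r1, r2, r3, r4, l1, l2, l3, l4, Non, *, not_true_eq_false,
            not_false_eq_true, and_true, true_and, and_false, false_and, if_true, if_false]
           norm_num))))

section
variable {V : Type*} [Fintype V] (A : V → V → Prop)

lemma price_le (hO : IsOriented A) (hT : T3Free A)
    (a b c d e : V) (h : Q5 A a b c d e) :
    price A cnt a b c d e ≤ 16 * Fintype.card V := by
  have e1 : price A cnt a b c d e
      = ∑ w, price A (fun p => if p w then (1 : ℝ) else 0) a b c d e := by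
    simp only [price, cnt, Finset.sum_add_distrib, ← Finset.mul_sum]
  rw [e1]
  calc _ ≤ ∑ _w : V, (16 : ℝ) := Finset.sum_le_sum fun w _ => price_point A hO hT a b c d e w h
    _ = _ := by simp [mul_comm]

lemma mu5_ge (hO : IsOriented A) (hT : T3Free A)
    (a b c d e : V) (h : Q5 A a b c d e) :
    1296 / (Fintype.card V : ℝ) ^ 5 ≤
      mu4 A a b c d / t4 A a b c d + mu4 A b c d e / t4 A b c d e := by
  have hp := price_le A hO hT a b c d e h
  have hn : (0 : ℝ) < Fintype.card V := by
    have : Nonempty V := ⟨a⟩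
    exact_mod_cast Fintype.card_pos
  generalize hnn : (Fintype.card V : ℝ) = n at *
  have h' := h
  have h'' := h
  unfold Q5 Q4 Q3 r4 r3 r2 Non at h'
  have R1a : 0 < cnt (r1 A a) := cnt_pos _ b (by unfold r1; tauto)
  have R1b : 0 < cnt (r1 A b) := cnt_pos _ c (by unfold r1; tauto)
  have R1c : 0 < cnt (r1 A c) := cnt_pos _ d (by unfold r1; tauto)
  have R1d : 0 < cnt (r1 A d) := cnt_pos _ e (by unfold r1; tauto)
  have L1d : 0 < cnt (l1 A d) := cnt_pos _ c (by unfold l1; tauto)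
  have L1e : 0 < cnt (l1 A e) := cnt_pos _ d (by unfold l1; tauto)
  have R2a : 0 < cnt (r2 A a b) := cnt_pos _ c (by unfold r2 Non; tauto)
  have R2b : 0 < cnt (r2 A b c) := cnt_pos _ d (by unfold r2 Non; tauto)
  have L2b : 0 < cnt (l2 A b c) := cnt_pos _ a (by unfold l2 Non; tauto)
  have L2c : 0 < cnt (l2 A c d) := cnt_pos _ b (by unfold l2 Non; tauto)
  have L2d : 0 < cnt (l2 A d e) := cnt_pos _ c (by unfold l2 Non; tauto)
  have R3a : 0 < cnt (r3 A a b c) := cnt_pos _ d (by unfold r3 Non; tauto)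
  have R3b : 0 < cnt (r3 A b c d) := cnt_pos _ e (by unfold r3 Non; tauto)
  have L3b : 0 < cnt (l3 A b c d) := cnt_pos _ a (by unfold l3 Non; tauto)
  have L3c : 0 < cnt (l3 A c d e) := cnt_pos _ b (by unfold l3 Non; tauto)
  have T3a : 0 < t3 A a b c := add_pos_of_pos_of_nonneg R3a (cnt_nonneg _)
  have T3b : 0 < t3 A b c d := add_pos_of_pos_of_nonneg R3b (cnt_nonneg _)
  have T3c : 0 < t3 A c d e := add_pos_of_nonneg_of_pos (cnt_nonneg _) L3c
  have T4a : 0 < t4 A a b c d := add_pos_of_pos_of_nonneg (cnt_pos _ e h.2) (cnt_nonneg _)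
  have T4b : 0 < t4 A b c d e :=
    add_pos_of_nonneg_of_pos (cnt_nonneg _) (cnt_pos _ a ((Q5_iff_left A _ _ _ _ _).1 h).2)
  have k1 := tangent1 n _ _ _ _ hn R1a R2a R3a T4a
  have k2 := tangent1 n _ _ _ _ hn L1d L2c L3b T4a
  have k3 := tangent2 n _ _ _ _ hn R1b L2b T3a T4a
  have k4 := tangent2 n _ _ _ _ hn R1c L2c T3b T4a
  have k5 := tangent1 n _ _ _ _ hn R1b R2b R3b T4b
  have k6 := tangent1 n _ _ _ _ hn L1e L2d L3c T4b
  have k7 := tangent2 n _ _ _ _ hn R1c L2c T3b T4b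
  have k8 := tangent2 n _ _ _ _ hn R1d L2d T3c T4b
  have key : 1296 / n ^ 5 ≤ 1296 / n ^ 5 * (5 - price A cnt a b c d e / (4 * n)) := by
    have : price A cnt a b c d e / (4 * n) ≤ 4 := by
      rw [div_le_iff₀ (by positivity)]; linarith
    have h0 : 0 ≤ 1296 / n ^ 5 := by positivity
    nlinarith
  refine key.trans ?_
  have e1 : 1296 / n ^ 5 * (5 - price A cnt a b c d e / (4 * n)) =
    1 / 6 * (648 / n ^ 5 * (5 - (6 * cnt (r1 A a) + 6 * cnt (r2 A a b) + 6 * cnt (r3 A a b c) + 3 * t4 A a b c d) / n))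
    + 1 / 6 * (648 / n ^ 5 * (5 - (6 * cnt (l1 A d) + 6 * cnt (l2 A c d) + 6 * cnt (l3 A b c d) + 3 * t4 A a b c d) / n))
    + 2 / 3 * (324 / n ^ 5 * (5 - (6 * cnt (r1 A b) + 6 * cnt (l2 A b c) + 3 * t3 A a b c + 3 * t4 A a b c d) / n))
    + 2 / 3 * (324 / n ^ 5 * (5 - (6 * cnt (r1 A c) + 6 * cnt (l2 A c d) + 3 * t3 A b c d + 3 * t4 A a b c d) / n))
    + 1 / 6 * (648 / n ^ 5 * (5 - (6 * cnt (r1 A b) + 6 * cnt (r2 A b c) + 6 * cnt (r3 A b c d) + 3 * t4 A b c d e) / n))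
    + 1 / 6 * (648 / n ^ 5 * (5 - (6 * cnt (l1 A e) + 6 * cnt (l2 A d e) + 6 * cnt (l3 A c d e) + 3 * t4 A b c d e) / n))
    + 2 / 3 * (324 / n ^ 5 * (5 - (6 * cnt (r1 A c) + 6 * cnt (l2 A c d) + 3 * t3 A b c d + 3 * t4 A b c d e) / n))
    + 2 / 3 * (324 / n ^ 5 * (5 - (6 * cnt (r1 A d) + 6 * cnt (l2 A d e) + 3 * t3 A c d e + 3 * t4 A b c d e) / n)) := by
    simp only [price, t3, t4]
    ring
  rw [e1]
  have e2 : mu4 A a b c d / t4 A a b c d + mu4 A b c d e / t4 A b c d e =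
      1 / 6 * (1 / n / cnt (r1 A a) / cnt (r2 A a b) / cnt (r3 A a b c) / t4 A a b c d)
    + 1 / 6 * (1 / n / cnt (l1 A d) / cnt (l2 A c d) / cnt (l3 A b c d) / t4 A a b c d)
    + 2 / 3 * (1 / n / cnt (r1 A b) / cnt (l2 A b c) / t3 A a b c / t4 A a b c d)
    + 2 / 3 * (1 / n / cnt (r1 A c) / cnt (l2 A c d) / t3 A b c d / t4 A a b c d)
    + 1 / 6 * (1 / n / cnt (r1 A b) / cnt (r2 A b c) / cnt (r3 A b c d) / t4 A b c d e)
    + 1 / 6 * (1 / n / cnt (l1 A e) / cnt (l2 A d e) / cnt (l3 A c d e) / t4 A b c d e)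
    + 2 / 3 * (1 / n / cnt (r1 A c) / cnt (l2 A c d) / t3 A b c d / t4 A b c d e)
    + 2 / 3 * (1 / n / cnt (r1 A d) / cnt (l2 A d e) / t3 A c d e / t4 A b c d e) := by
    simp only [mu4, mR, mL, mM, hnn]
    ring
  rw [e2]
  linarith

/-- The number of (labelled) induced five vertex paths is at most `n ^ 5 / 6 ^ 4`. -/
lemma count_le (hO : IsOriented A) (hT : T3Free A) :
    1296 * ∑ a, ∑ b, ∑ c, ∑ d, ∑ e, (if Q5 A a b c d e then (1 : ℝ) else 0)
      ≤ (Fintype.card V : ℝ) ^ 5 := by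
  rcases Nat.eq_zero_or_pos (Fintype.card V) with h0 | hpos
  · have := Fintype.card_eq_zero_iff.1 h0
    simp
  have hn : (0 : ℝ) < (Fintype.card V : ℝ) ^ 5 := by positivity
  have h : (1296 / (Fintype.card V : ℝ) ^ 5) *
      ∑ a, ∑ b, ∑ c, ∑ d, ∑ e, (if Q5 A a b c d e then (1 : ℝ) else 0) ≤ 1 := by
    refine le_trans ?_ (sum_mu5 A)
    simp only [Finset.mul_sum]
    refine Finset.sum_le_sum fun a _ => Finset.sum_le_sum fun b _ => Finset.sum_le_sum fun c _ =>
      Finset.sum_le_sum fun d _ => Finset.sum_le_sum fun e _ => ?_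
    split_ifs with hq
    · rw [mul_one]; exact mu5_ge A hO hT a b c d e hq
    · simp
  rwa [div_mul_eq_mul_div, div_le_one hn] at h

end

lemma numPaths_le_count {V : Type*} [Fintype V] [DecidableEq V] (A : V → V → Prop) :
    (numPaths A 5 : ℝ) ≤ ∑ a, ∑ b, ∑ c, ∑ d, ∑ e, (if Q5 A a b c d e then (1 : ℝ) else 0) := by
  have h : numPaths A 5 ≤ (Finset.univ.filter fun p : V × V × V × V × V =>
      Q5 A p.1 p.2.1 p.2.2.1 p.2.2.2.1 p.2.2.2.2).card := by
    unfold numPaths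
    refine le_trans (Finset.card_le_card ?_) (Finset.card_image_le
      (f := fun p : V × V × V × V × V => ({p.1, p.2.1, p.2.2.1, p.2.2.2.1, p.2.2.2.2} : Finset V)))
    intro S hS
    obtain ⟨f, -, hmem, hA⟩ := (Finset.mem_filter.1 hS).2
    refine Finset.mem_image.2 ⟨(f 0, f 1, f 2, f 3, f 4), ?_, ?_⟩
    · refine Finset.mem_filter.2 ⟨Finset.mem_univ _, ?_⟩
      simp [Q5, Q4, Q3, r2, r3, r4, Non, hA]
    · ext v
      rw [hmem]
      simp [Fin.exists_fin_succ, eq_comm]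
  calc (numPaths A 5 : ℝ) ≤ ((Finset.univ.filter fun p : V × V × V × V × V =>
      Q5 A p.1 p.2.1 p.2.2.1 p.2.2.2.1 p.2.2.2.2).card : ℝ) := by exact_mod_cast h
    _ = _ := by
      rw [← Finset.sum_boole]
      simp only [Fintype.sum_prod_type]

lemma numPaths_le (n : ℕ) (A : Fin n → Fin n → Prop) (hO : IsOriented A) (hT : T3Free A) :
    1296 * (numPaths A 5 : ℝ) ≤ (n : ℝ) ^ 5 := by
  have h1 := count_le A hO hT
  have h2 := numPaths_le_count A
  rw [Fintype.card_fin] at h1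
  linarith

lemma pathDensity_le (n : ℕ) (hn : 5 ≤ n) (A : Fin n → Fin n → Prop) (hO : IsOriented A)
    (hT : T3Free A) : pathDensity A 5 ≤ (120 / 1296) * ((n : ℝ) / ((n : ℝ) - 4)) ^ 5 := by
  have h := numPaths_le n A hO hT
  have hc : ((n + 1 - 5 : ℕ) : ℝ) ^ 5 / (Nat.factorial 5 : ℝ) ≤ (n.choose 5 : ℝ) :=
    Nat.pow_le_choose 5 n
  have hn' : (5 : ℝ) ≤ n := by exact_mod_cast hn
  have e : ((n + 1 - 5 : ℕ) : ℝ) = (n : ℝ) - 4 := by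
    rw [Nat.cast_sub (by omega)]; push_cast; ring
  rw [e] at hc
  have hf : (Nat.factorial 5 : ℝ) = 120 := by norm_num [Nat.factorial]
  rw [hf] at hc
  have hp : (0 : ℝ) < ((n : ℝ) - 4) ^ 5 := by
    have : (0 : ℝ) < (n : ℝ) - 4 := by linarith
    positivity
  unfold pathDensity
  rw [Fintype.card_fin]
  have hc0 : (0 : ℝ) < n.choose 5 := lt_of_lt_of_le (by positivity) hc
  rw [div_pow, div_le_iff₀ hc0]
  have hn5 : (0 : ℝ) ≤ (n : ℝ) ^ 5 := by positivity
  calc (numPaths A 5 : ℝ) ≤ (n : ℝ) ^ 5 / 1296 := by linarith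
    _ = 120 / 1296 * ((n : ℝ) ^ 5 / ((n : ℝ) - 4) ^ 5) * (((n : ℝ) - 4) ^ 5 / 120) := by
      have h4 : (n : ℝ) - 4 ≠ 0 := (by linarith : (0 : ℝ) < (n : ℝ) - 4).ne'
      field_simp
    _ ≤ _ := mul_le_mul_of_nonneg_left hc (by positivity)

/-- The blow-up of the directed six-cycle. -/
def C6 (n : ℕ) (u v : Fin n) : Prop := (v : ℕ) % 6 = ((u : ℕ) + 1) % 6

lemma C6_oriented (n : ℕ) : IsOriented (C6 n) := by
  intro a b h1 h2
  unfold C6 at *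
  omega

lemma C6_T3Free (n : ℕ) : T3Free (C6 n) := by
  rintro a b c ⟨h1, h2, h3⟩
  unfold C6 at *
  omega

lemma res_inj : ∀ c c' : Fin 6,
    (∀ i : Fin 5, ∃ j : Fin 5, ((c : ℕ) + i) % 6 = ((c' : ℕ) + j) % 6) → c = c' := by
  decide

/-- The vertex of the blow-up in class `c + i` with index `q i`. -/
def vtx (n : ℕ) (p : Fin 6 × (Fin 5 → Fin (n / 6))) (i : Fin 5) : Fin n :=
  ⟨6 * (p.2 i : ℕ) + ((p.1 : ℕ) + i) % 6, by have := (p.2 i).2; omega⟩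

lemma vtx_res (n : ℕ) (p : Fin 6 × (Fin 5 → Fin (n / 6))) (i : Fin 5) :
    (vtx n p i : ℕ) % 6 = ((p.1 : ℕ) + i) % 6 := by
  simp only [vtx]; omega

lemma numPaths_C6 (n : ℕ) : 6 * (n / 6) ^ 5 ≤ numPaths (C6 n) 5 := by
  have hcard : (Finset.univ : Finset (Fin 6 × (Fin 5 → Fin (n / 6)))).card = 6 * (n / 6) ^ 5 := by
    simp
  rw [← hcard]
  unfold numPaths
  refine Finset.card_le_card_of_injOn (fun p => Finset.univ.image (vtx n p)) ?_ ?_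
  · intro p _
    simp only [Finset.coe_filter, Finset.mem_univ, true_and, Set.mem_ofPred_eq]
    refine ⟨vtx n p, ?_, ?_, ?_⟩
    · intro i j h
      have h1 := vtx_res n p i
      have h2 := vtx_res n p j
      rw [h] at h1
      ext
      omega
    · intro v; simp
    · intro i j
      have h1 := vtx_res n p i
      have h2 := vtx_res n p j
      unfold C6
      omega
  · intro p _ p' _ h
    have key : ∀ i, ∃ j, vtx n p' j = vtx n p i := by
      intro i
      have : vtx n p i ∈ Finset.univ.image (vtx n p') := by
        rw [← show Finset.univ.image (vtx n p) = Finset.univ.image (vtx n p') from h]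
        simp
      simpa using this
    have hc : p.1 = p'.1 := by
      apply res_inj
      intro i
      obtain ⟨j, hj⟩ := key i
      exact ⟨j, by rw [← vtx_res n p i, ← vtx_res n p' j, hj]⟩
    refine Prod.ext hc ?_
    funext i
    obtain ⟨j, hj⟩ := key i
    have h1 := vtx_res n p i
    have h2 := vtx_res n p' j
    rw [hj, ← hc] at h2
    have hij : j = i := by ext; omega
    subst hij
    have h3 := congrArg Fin.val hj
    simp only [vtx, hc] at h3
    ext
    omega

lemma pathDensity_C6 (n : ℕ) (hn : 5 ≤ n) :
    (120 / 1296) * (((n : ℝ) - 5) / n) ^ 5 ≤ pathDensity (C6 n) 5 := by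
  have h : (6 : ℝ) * ((n / 6 : ℕ) : ℝ) ^ 5 ≤ (numPaths (C6 n) 5 : ℝ) := by
    exact_mod_cast numPaths_C6 n
  have hn' : (5 : ℝ) ≤ n := by exact_mod_cast hn
  have hq : ((n : ℝ) - 5) / 6 ≤ ((n / 6 : ℕ) : ℝ) := by
    have : n ≤ 6 * (n / 6) + 5 := by omega
    have : (n : ℝ) ≤ 6 * ((n / 6 : ℕ) : ℝ) + 5 := by exact_mod_cast this
    linarith
  have hq5 := pow_le_pow_left₀ (by linarith : (0 : ℝ) ≤ ((n : ℝ) - 5) / 6) hq 5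
  have hc : (n.choose 5 : ℝ) ≤ (n : ℝ) ^ 5 / (Nat.factorial 5 : ℝ) := Nat.choose_le_pow_div 5 n
  have hf : (Nat.factorial 5 : ℝ) = 120 := by norm_num [Nat.factorial]
  rw [hf] at hc
  have hc0 : (0 : ℝ) < n.choose 5 := by exact_mod_cast Nat.choose_pos hn
  unfold pathDensity
  rw [Fintype.card_fin, le_div_iff₀ hc0, div_pow]
  have hn0 : (0 : ℝ) < (n : ℝ) ^ 5 := by positivity
  have hs : (0 : ℝ) ≤ ((n : ℝ) - 5) ^ 5 := pow_nonneg (by linarith) 5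
  calc (120 / 1296) * (((n : ℝ) - 5) ^ 5 / (n : ℝ) ^ 5) * (n.choose 5 : ℝ)
      ≤ (120 / 1296) * (((n : ℝ) - 5) ^ 5 / (n : ℝ) ^ 5) * ((n : ℝ) ^ 5 / 120) :=
        mul_le_mul_of_nonneg_left hc (by positivity)
    _ = 6 * (((n : ℝ) - 5) / 6) ^ 5 := by
      field_simp; ring
    _ ≤ _ := by linarith

lemma tendsto_ratio (a b : ℝ) :
    Filter.Tendsto (fun n : ℕ => ((n : ℝ) + a) / ((n : ℝ) + b)) Filter.atTop (nhds 1) := by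
  have h := tendsto_add_mul_div_add_mul_atTop_nhds (𝕜 := ℝ) a b 1 (d := 1) one_ne_zero
  simpa [add_comm] using h

end P5T3

/-- `I(P⃗₅, T⃗) = 5!/6⁴`: the maximum density of induced copies of
`P⃗₅` over `T⃗₃`-free oriented graphs on `n` vertices tends to `5!/6⁴` as `n → ∞`. -/
theorem inducibility_P5_T3free :
    Filter.Tendsto (fun n : ℕ => maxDensityT3 5 n) Filter.atTop
      (nhds ((Nat.factorial 5 : ℝ) / 6 ^ 4)) := by
  have hval : ((Nat.factorial 5 : ℝ) / 6 ^ 4) = 120 / 1296 * 1 ^ 5 := by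
    norm_num [Nat.factorial]
  rw [hval]
  have hlow : Filter.Tendsto (fun n : ℕ => (120 / 1296 : ℝ) * (((n : ℝ) - 5) / n) ^ 5)
      Filter.atTop (nhds (120 / 1296 * 1 ^ 5)) := by
    have h := P5T3.tendsto_ratio (-5) 0
    simp only [add_zero, ← sub_eq_add_neg] at h
    exact (h.pow 5).const_mul _
  have hup : Filter.Tendsto (fun n : ℕ => (120 / 1296 : ℝ) * ((n : ℝ) / ((n : ℝ) - 4)) ^ 5)
      Filter.atTop (nhds (120 / 1296 * 1 ^ 5)) := by
    have h := P5T3.tendsto_ratio 0 (-4)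
    simp only [add_zero, ← sub_eq_add_neg] at h
    exact (h.pow 5).const_mul _
  refine tendsto_of_tendsto_of_tendsto_of_le_of_le' hlow hup ?_ ?_
  · filter_upwards [Filter.eventually_ge_atTop 5] with n hn
    refine le_trans (P5T3.pathDensity_C6 n hn) (le_csSup ?_ ?_)
    · refine ⟨(120 / 1296) * ((n : ℝ) / ((n : ℝ) - 4)) ^ 5, ?_⟩
      rintro d ⟨A, hO, hT, rfl⟩
      exact P5T3.pathDensity_le n hn A hO hT
    · exact ⟨_, P5T3.C6_oriented n, P5T3.C6_T3Free n, rfl⟩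
  · filter_upwards [Filter.eventually_ge_atTop 5] with n hn
    refine csSup_le ⟨_, _, P5T3.C6_oriented n, P5T3.C6_T3Free n, rfl⟩ ?_
    rintro d ⟨A, hO, hT, rfl⟩
    exact P5T3.pathDensity_le n hn A hO hT
end
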